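/- arXiv:1711.11469 — 2 statements merged into one kernel-verified Lean document; each statement's English description precedes it below -/
import Mathlib

section
/- Let n ≥ 6 be an integer and let k be a real number with 1 ≤ k ≤ n such that k is not an integer or n/k is not an integer. Set ρ = 1 − (n/k − 1)/(n − 1), t(n,ρ) = C(n,3) − (n(n−1)(1−ρ)/6)·((1+2ρ)n − 2 − 2ρ), and d = 2⌊min{k, n/k}⌋ + 2. Then there do not exist polynomials f_{ij} (for 1 ≤ i < j ≤ n), f, h, and a finite family g₁, …, g_m in ℝ[x_{ij} : 1 ≤ i < j ≤ n] such that −1 = Σ_{i<j} f_{ij}·(x_{ij}² − x_{ij}) + f·(Σ_{i<j} x_{ij} − ρ·C(n,2)) + h·(Σ_{i<j<l} x_{ij}x_{il}x_{jl} − t(n,ρ)) + Σ_{t=1}^{m} g_t², where indexdeg(f_{ij}) ≤ d − 2, indexdeg(f) ≤ d − 2, indexdeg(h) ≤ d − 3, and 2·indexdeg(g_t) ≤ d for all t. -/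
open MvPolynomial Finset

/-- The edges of the complete graph `Kₙ`: 2-element subsets of `{1,…,n}`. -/
abbrev KEdge (n : ℕ) := {e : Finset (Fin n) // e.card = 2}

/-- The index degree of a polynomial in the variables `x_e` indexed by edges of `Kₙ`. -/
noncomputable def indexDeg {n : ℕ} (p : MvPolynomial (KEdge n) ℝ) : ℕ :=
  p.support.sup fun d => (d.support.biUnion fun e => (e : Finset (Fin n))).card

namespace TriSOS

/-- `F` depends only on the colours of the vertices in `U`. -/
def Dep {n : ℕ} (U : Finset (Fin n)) (F : (Fin n → Fin n) → ℝ) : Prop :=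
  ∀ c₁ c₂, (∀ i ∈ U, c₁ i = c₂ i) → F c₁ = F c₂

/-- `F` is a function of the partition induced by the colouring on `U`. -/
def PJ {n : ℕ} (U : Finset (Fin n)) (F : (Fin n → Fin n) → ℝ) : Prop :=
  Dep U F ∧ ∀ (π : Equiv.Perm (Fin n)) c, F (fun i => π (c i)) = F c

def bb {n : ℕ} (U : Finset (Fin n)) (c : Fin n → Fin n) (v : Fin n) : ℕ :=
  (U.filter (fun i => c i = v)).card

noncomputable def ff (x : ℝ) (r : ℕ) : ℝ := ∏ t ∈ range r, (x - t)

noncomputable def W {n : ℕ} (k m : ℝ) (U : Finset (Fin n)) (c : Fin n → Fin n) : ℝ :=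
  (∏ t ∈ range (U.image c).card, ((k - t) / ((n : ℝ) - t))) * ∏ v, ff m (bb U c v)

noncomputable def q {n : ℕ} (k m : ℝ) (U : Finset (Fin n)) (c : Fin n → Fin n) (v : Fin n) : ℝ :=
  (m - bb U c v) * if v ∈ U.image c then 1 else
    (k - (U.image c).card) / ((n : ℝ) - (U.image c).card)

lemma W_dep {n : ℕ} (k m : ℝ) (U : Finset (Fin n)) : Dep U (W k m U) := by
  intro c c' h
  have h1 : U.image c = U.image c' := Finset.image_congr (fun i hi => h i hi)
  have h2 : ∀ v, bb U c v = bb U c' v := by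
    intro v
    unfold bb
    congr 1
    apply Finset.filter_congr
    intro i hi
    rw [h i hi]
  unfold W
  rw [h1]
  simp only [h2]

lemma q_dep {n : ℕ} (k m : ℝ) (U : Finset (Fin n)) (v : Fin n) :
    Dep U (fun c => q k m U c v) := by
  intro c c' h
  have h1 : U.image c = U.image c' := Finset.image_congr (fun i hi => h i hi)
  have h2 : ∀ v, bb U c v = bb U c' v := by
    intro v
    unfold bb
    congr 1
    apply Finset.filter_congr
    intro i hi
    rw [h i hi]
  simp only [q]
  rw [h1]
  simp only [h2]

lemma q_perm {n : ℕ} (k m : ℝ) (U : Finset (Fin n)) (c : Fin n → Fin n) (v : Fin n)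
    (π : Equiv.Perm (Fin n)) : q k m U (fun i => π (c i)) (π v) = q k m U c v := by
  have h1 : U.image (fun i => π (c i)) = (U.image c).image π := by
    rw [Finset.image_image]; rfl
  have h2 : bb U (fun i => π (c i)) (π v) = bb U c v := by
    unfold bb
    simp
  have h3 : ((U.image c).image π).card = (U.image c).card :=
    Finset.card_image_of_injective _ π.injective
  have h4 : π v ∈ (U.image c).image π ↔ v ∈ U.image c := by
    simp [-Finset.mem_image, Finset.mem_image (f := π)]
  unfold q
  rw [h1, h2, h3]
  simp only [h4]

lemma W_insert {n : ℕ} (k m : ℝ) (U : Finset (Fin n)) (c : Fin n → Fin n) (i v : Fin n)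
    (hi : i ∉ U) :
    W k m (insert i U) (Function.update c i v) = q k m U c v * W k m U c := by
  have hne : ∀ j ∈ U, Function.update c i v j = c j := by
    intro j hj
    rw [Function.update_of_ne]
    rintro rfl
    exact hi hj
  have h1 : (insert i U).image (Function.update c i v) = insert v (U.image c) := by
    rw [Finset.image_insert, Function.update_self]
    congr 1
    exact Finset.image_congr hne
  have h2 : ∀ u, bb (insert i U) (Function.update c i v) u
      = if u = v then bb U c u + 1 else bb U c u := by
    intro u
    unfold bb
    rw [Finset.filter_insert, Function.update_self]
    have : U.filter (fun j => Function.update c i v j = u) = U.filter (fun j => c j = u) := by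
      apply Finset.filter_congr
      intro j hj
      rw [hne j hj]
    rw [this]
    by_cases huv : v = u
    · subst huv
      simp [hi]
    · simp [huv, Ne.symm huv]
  have h3 : ∀ u, ff m (bb (insert i U) (Function.update c i v) u)
      = ff m (bb U c u) * if u = v then (m - bb U c u) else 1 := by
    intro u
    rw [h2]
    split_ifs
    · unfold ff
      rw [Finset.prod_range_succ]
    · simp
  unfold W q
  rw [h1]
  simp only [h3]
  rw [Finset.prod_mul_distrib, Finset.prod_ite_eq']
  by_cases hv : v ∈ U.image c
  · rw [Finset.insert_eq_of_mem hv]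
    simp only [hv, if_true, Finset.mem_univ]
    ring
  · rw [Finset.card_insert_of_notMem hv, Finset.prod_range_succ]
    simp only [hv, if_true, if_false, Finset.mem_univ]
    ring

lemma sum_bb {n : ℕ} (U : Finset (Fin n)) (c : Fin n → Fin n) :
    ∑ v ∈ U.image c, bb U c v = U.card := by
  unfold bb
  exact (Finset.card_eq_sum_card_image c U).symm

lemma bb_zero {n : ℕ} (U : Finset (Fin n)) (c : Fin n → Fin n) (v : Fin n)
    (hv : v ∉ U.image c) : bb U c v = 0 := by
  unfold bb
  rw [Finset.card_eq_zero, Finset.filter_eq_empty_iff]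
  intro i hi h
  exact hv (Finset.mem_image.2 ⟨i, hi, h⟩)

lemma sum_q {n : ℕ} (k m : ℝ) (hkm : k * m = n) (U : Finset (Fin n)) (c : Fin n → Fin n)
    (hU : U.card < n) : ∑ v, q k m U c v = n - U.card := by
  rw [← Finset.sum_add_sum_compl (U.image c)]
  have h1 : ∑ v ∈ U.image c, q k m U c v = (U.image c).card * m - U.card := by
    rw [← sum_bb U c]
    push_cast
    rw [Finset.sum_congr rfl (g := fun v => m - (bb U c v : ℝ))]
    · simp
    · intro v hv
      simp only [q, hv, if_true, mul_one]
  have hr : (U.image c).card < n := lt_of_le_of_lt Finset.card_image_le hU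
  have h2 : ∑ v ∈ (U.image c)ᶜ, q k m U c v = m * (k - (U.image c).card) := by
    rw [Finset.sum_congr rfl
      (g := fun v => m * ((k - (U.image c).card) / ((n : ℝ) - (U.image c).card)))]
    · rw [Finset.sum_const, Finset.card_compl, Fintype.card_fin, nsmul_eq_mul,
        Nat.cast_sub hr.le]
      have : (n : ℝ) - (U.image c).card ≠ 0 := by
        have : ((U.image c).card : ℝ) < n := by exact_mod_cast hr
        linarith
      field_simp
    · intro v hv
      rw [Finset.mem_compl] at hv
      simp only [q, hv, if_false, bb_zero U c v hv]
      simp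
  rw [h1, h2, ← hkm]
  ring

lemma W_nonneg {n : ℕ} (k m : ℝ) (s : ℕ) (hk : (s : ℝ) ≤ k + 1) (hm : (s : ℝ) ≤ m + 1)
    (U : Finset (Fin n)) (c : Fin n → Fin n) (hU : U.card ≤ s) : 0 ≤ W k m U c := by
  have hr : (U.image c).card ≤ U.card := Finset.card_image_le
  have hUn : U.card ≤ n := by simpa using Finset.card_le_univ U
  unfold W
  apply mul_nonneg
  · apply Finset.prod_nonneg
    intro t ht
    rw [Finset.mem_range] at ht
    apply div_nonneg
    · have : ((t + 1 : ℕ) : ℝ) ≤ s := by exact_mod_cast (by omega)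
      push_cast at this
      linarith
    · have : (t : ℝ) ≤ n := by exact_mod_cast (by omega)
      linarith
  · apply Finset.prod_nonneg
    intro v _
    unfold ff
    apply Finset.prod_nonneg
    intro t ht
    rw [Finset.mem_range] at ht
    have hb : bb U c v ≤ U.card := Finset.card_filter_le _ _
    have : ((t + 1 : ℕ) : ℝ) ≤ s := by exact_mod_cast (by omega)
    push_cast at this
    linarith

/-- The pseudo-expectation computed on the vertex set `U`. -/
noncomputable def EU {n : ℕ} (k m : ℝ) (U : Finset (Fin n)) :
    ((Fin n → Fin n) → ℝ) →ₗ[ℝ] ℝ where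
  toFun F := (∑ c, W k m U c * F c) / ((n : ℝ) ^ (n - U.card) * (n.descFactorial U.card : ℝ))
  map_add' F G := by
    simp only [Pi.add_apply, mul_add, Finset.sum_add_distrib, add_div]
  map_smul' a F := by
    simp only [Pi.smul_apply, smul_eq_mul, RingHom.id_apply]
    rw [← mul_div_assoc, Finset.mul_sum]
    congr 1
    apply Finset.sum_congr rfl
    intros
    ring

lemma EU_apply {n : ℕ} (k m : ℝ) (U : Finset (Fin n)) (F : (Fin n → Fin n) → ℝ) :
    EU k m U F = (∑ c, W k m U c * F c) /
      ((n : ℝ) ^ (n - U.card) * (n.descFactorial U.card : ℝ)) := rfl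

lemma sum_update {n : ℕ} (i : Fin n) (G : (Fin n → Fin n) → ℝ) :
    ∑ c, ∑ v, G (Function.update c i v) = n * ∑ c, G c := by
  have h : ∀ c, ∑ v, G (Function.update c i v)
      = ∑ v, G (Function.update c i (c i + v)) := by
    intro c
    have : NeZero n := ⟨by have := i.2; omega⟩
    exact (Equiv.sum_comp (Equiv.addLeft (c i)) (fun v => G (Function.update c i v))).symm
  simp only [h]
  rw [Finset.sum_comm]
  have : NeZero n := ⟨by have := i.2; omega⟩
  have h2 : ∀ v, ∑ c : Fin n → Fin n, G (Function.update c i (c i + v)) = ∑ c, G c := by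
    intro v
    let e : (Fin n → Fin n) ≃ (Fin n → Fin n) :=
      { toFun := fun c => Function.update c i (c i + v)
        invFun := fun c => Function.update c i (c i - v)
        left_inv := by intro c; simp
        right_inv := by intro c; simp }
    exact Equiv.sum_comp e G
  simp [h2]

lemma EU_step {n : ℕ} (k m : ℝ) (U : Finset (Fin n)) (i : Fin n) (hi : i ∉ U)
    (hU : U.card < n) (G : (Fin n → Fin n) → ℝ) :
    EU k m (insert i U) G =
      EU k m U (fun c => ∑ v, q k m U c v * G (Function.update c i v)) / ((n : ℝ) - U.card) := by
  rw [EU_apply, EU_apply, Finset.card_insert_of_notMem hi]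
  have h1 := sum_update i (fun c => W k m (insert i U) c * G c)
  simp only [W_insert k m U _ i _ hi] at h1
  have hn : (n : ℝ) ≠ 0 := by
    have : n ≠ 0 := by omega
    exact_mod_cast this
  have h2 : ∑ c, W k m (insert i U) c * G c
      = (∑ c, W k m U c * ∑ v, q k m U c v * G (Function.update c i v)) / n := by
    rw [eq_div_iff hn, mul_comm, ← h1]
    apply Finset.sum_congr rfl
    intro c _
    rw [Finset.mul_sum]
    apply Finset.sum_congr rfl
    intros
    ring
  rw [h2, Nat.descFactorial_succ]
  have h3 : n - U.card = (n - (U.card + 1)) + 1 := by omega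
  have h4 : (n.descFactorial U.card : ℝ) ≠ 0 := by
    have := Nat.descFactorial_eq_zero_iff_lt (n := n) (k := U.card)
    have h5 : n.descFactorial U.card ≠ 0 := by
      intro h; rw [this] at h; omega
    exact_mod_cast h5
  have h5 : (n : ℝ) - U.card ≠ 0 := by
    have : (U.card : ℝ) < n := by exact_mod_cast hU
    linarith
  have h6 : (n : ℝ) ^ (n - U.card) = (n : ℝ) ^ (n - (U.card + 1)) * n := by
    rw [← pow_succ, ← h3]
  rw [h6, Nat.cast_mul, Nat.cast_sub hU.le]
  field_simp

noncomputable def E {n : ℕ} (k m : ℝ) : ((Fin n → Fin n) → ℝ) →ₗ[ℝ] ℝ := EU k m univ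

lemma Dep.mono {n : ℕ} {U V : Finset (Fin n)} (h : U ⊆ V) {F : (Fin n → Fin n) → ℝ}
    (hF : Dep U F) : Dep V F := fun c c' hc => hF c c' (fun i hi => hc i (h hi))

lemma PJ.mono {n : ℕ} {U V : Finset (Fin n)} (h : U ⊆ V) {F : (Fin n → Fin n) → ℝ}
    (hF : PJ U F) : PJ V F := ⟨hF.1.mono h, hF.2⟩

lemma Dep.update {n : ℕ} {U : Finset (Fin n)} {F : (Fin n → Fin n) → ℝ}
    (hF : Dep U F) {i : Fin n} (hi : i ∉ U) (c : Fin n → Fin n) (v : Fin n) :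
    F (Function.update c i v) = F c := by
  apply hF
  intro j hj
  rw [Function.update_of_ne]
  rintro rfl
  exact hi hj

lemma EU_eq {n : ℕ} (k m : ℝ) (hkm : k * m = n) (t : ℕ) : ∀ (U : Finset (Fin n))
    (_ : U.card + t = n) (G : (Fin n → Fin n) → ℝ) (_ : Dep U G), EU k m U G = E k m G := by
  induction t with
  | zero =>
    intro U hU G _
    have : U = univ := by
      rw [← Finset.card_eq_iff_eq_univ]; simpa using hU
    rw [this]; rfl
  | succ t ih =>
    intro U hU G hG
    have hlt : U.card < n := by omega
    obtain ⟨i, hi⟩ : ∃ i, i ∉ U := by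
      by_contra! h
      have : U = univ := Finset.eq_univ_iff_forall.2 h
      rw [this] at hlt
      simp at hlt
    rw [← ih (insert i U) (by rw [Finset.card_insert_of_notMem hi]; omega) G
      (hG.mono (Finset.subset_insert _ _)), EU_step k m U i hi hlt]
    have h5 : (n : ℝ) - U.card ≠ 0 := by
      have : (U.card : ℝ) < n := by exact_mod_cast hlt
      linarith
    rw [eq_div_iff h5]
    have : (fun c => ∑ v, q k m U c v * G (Function.update c i v))
        = ((n : ℝ) - U.card) • G := by
      funext c
      simp only [hG.update hi, ← Finset.sum_mul, sum_q k m hkm U c hlt]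
      rfl
    rw [this, map_smul, smul_eq_mul, mul_comm]

lemma EU_eq' {n : ℕ} (k m : ℝ) (hkm : k * m = n) (U : Finset (Fin n))
    (G : (Fin n → Fin n) → ℝ) (hG : Dep U G) : EU k m U G = E k m G := by
  have : U.card ≤ n := by simpa using Finset.card_le_univ U
  exact EU_eq k m hkm (n - U.card) U (by omega) G hG

lemma E_one {n : ℕ} (hn : n ≠ 0) (k m : ℝ) (hkm : k * m = n) :
    E k m (1 : (Fin n → Fin n) → ℝ) = 1 := by
  rw [← EU_eq' k m hkm ∅ 1 (fun _ _ _ => rfl), EU_apply]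
  have : (n : ℝ) ≠ 0 := by exact_mod_cast hn
  simp [W, bb, ff, this]

lemma E_nonneg {n : ℕ} (k m : ℝ) (hkm : k * m = n) (s : ℕ) (hk : (s : ℝ) ≤ k + 1)
    (hm : (s : ℝ) ≤ m + 1) (U : Finset (Fin n)) (hU : U.card ≤ s)
    (G : (Fin n → Fin n) → ℝ) (hG : Dep U G) (hG0 : ∀ c, 0 ≤ G c) : 0 ≤ E k m G := by
  rw [← EU_eq' k m hkm U G hG, EU_apply]
  apply div_nonneg
  · exact Finset.sum_nonneg (fun c _ => mul_nonneg (W_nonneg k m s hk hm U c hU) (hG0 c))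
  · positivity

lemma E_step {n : ℕ} (k m : ℝ) (hkm : k * m = n) (U : Finset (Fin n)) (i : Fin n) (hi : i ∉ U)
    (hU : U.card < n) (G : (Fin n → Fin n) → ℝ) (hG : Dep (insert i U) G) :
    E k m G =
      E k m (fun c => ∑ v, q k m U c v * G (Function.update c i v)) / ((n : ℝ) - U.card) := by
  rw [← EU_eq' k m hkm _ G hG, EU_step k m U i hi hU, EU_eq' k m hkm U]
  intro c c' h
  apply Finset.sum_congr rfl
  intro v _
  rw [show q k m U c v = q k m U c' v from q_dep k m U v c c' h]
  congr 1
  apply hG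
  intro j hj
  by_cases hji : j = i
  · subst hji; simp
  · rw [Function.update_of_ne hji, Function.update_of_ne hji]
    exact h j (Finset.mem_of_mem_insert_of_ne hj hji)

/-- Permutation invariance. -/
lemma E_perm {n : ℕ} (k m : ℝ) (σ : Equiv.Perm (Fin n)) (F : (Fin n → Fin n) → ℝ) :
    E k m (fun c => F (fun i => c (σ i))) = E k m F := by
  unfold E
  rw [EU_apply, EU_apply]
  congr 1
  have hW : ∀ c : Fin n → Fin n, W k m univ (fun i => c (σ i)) = W k m univ c := by
    intro c
    have h1 : (univ : Finset (Fin n)).image (fun i => c (σ i)) = univ.image c := by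
      ext v
      simp only [Finset.mem_image, Finset.mem_univ, true_and]
      constructor
      · rintro ⟨i, rfl⟩; exact ⟨σ i, rfl⟩
      · rintro ⟨i, rfl⟩; exact ⟨σ.symm i, by simp⟩
    have h2 : ∀ v, bb univ (fun i => c (σ i)) v = bb univ c v := by
      intro v
      unfold bb
      apply Finset.card_equiv σ
      simp
    unfold W
    rw [h1]
    simp only [h2]
  let e : (Fin n → Fin n) ≃ (Fin n → Fin n) := σ.symm.arrowCongr (Equiv.refl _)
  rw [← Equiv.sum_comp e (fun c => W k m univ c * F c)]
  apply Finset.sum_congr rfl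
  intro c _
  have : e c = fun i => c (σ i) := by
    funext i; simp [e]
  rw [this, hW]

/-- The degree relation. -/
lemma E_deg {n : ℕ} (k m : ℝ) (hkm : k * m = n) (U : Finset (Fin n)) (a : Fin n) (ha : a ∈ U)
    (hU : U.card < n) (F : (Fin n → Fin n) → ℝ) (hF : Dep U F) :
    E k m (fun c => F c * ((∑ i, if c i = c a then (1 : ℝ) else 0) - m)) = 0 := by
  have h5 : (n : ℝ) - U.card ≠ 0 := by
    have : (U.card : ℝ) < n := by exact_mod_cast hU
    linarith
  have h1 : ∀ i ∈ Uᶜ, E k m (fun c => F c * if c i = c a then (1 : ℝ) else 0)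
      = E k m (fun c => F c * (m - bb U c (c a))) / ((n : ℝ) - U.card) := by
    intro i hi
    rw [Finset.mem_compl] at hi
    have hai : a ≠ i := by rintro rfl; exact hi ha
    rw [E_step k m hkm U i hi hU]
    · congr 2
      funext c
      simp only [hF.update hi, Function.update_self, Function.update_of_ne hai]
      simp only [mul_ite, mul_one, mul_zero, Finset.sum_ite_eq', Finset.mem_univ, if_true]
      have : c a ∈ U.image c := Finset.mem_image_of_mem _ ha
      simp only [q, this, if_true]
      ring
    · intro c c' h
      simp only
      rw [hF c c' (fun j hj => h j (Finset.mem_insert_of_mem hj)),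
        h i (Finset.mem_insert_self _ _), h a (Finset.mem_insert_of_mem ha)]
  have h2 : (fun c => F c * ((∑ i, if c i = c a then (1 : ℝ) else 0) - m))
      = (∑ i ∈ Uᶜ, fun c => F c * if c i = c a then (1 : ℝ) else 0)
        - (fun c => F c * (m - bb U c (c a))) := by
    funext c
    simp only [Pi.sub_apply, Finset.sum_apply]
    rw [← Finset.sum_add_sum_compl U, ← Finset.mul_sum]
    unfold bb
    rw [Finset.card_filter]
    push_cast
    ring
  rw [h2, map_sub, map_sum, Finset.sum_congr rfl h1, Finset.sum_const, Finset.card_compl,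
    Fintype.card_fin, nsmul_eq_mul, Nat.cast_sub hU.le, mul_div_cancel₀ _ h5, sub_self]

/-- Replace the vertex `j` by `i` in the function `F`. -/
def repl {n : ℕ} (j i : Fin n) (F : (Fin n → Fin n) → ℝ) : (Fin n → Fin n) → ℝ :=
  fun c => F (Function.update c j (c i))

noncomputable def hA {n : ℕ} (k m : ℝ) (A : Finset (Fin n)) (j : Fin n)
    (F : (Fin n → Fin n) → ℝ) : (Fin n → Fin n) → ℝ :=
  fun c => ∑ v, q k m A c v * F (Function.update c j v)

lemma update_perm {n : ℕ} (π : Equiv.Perm (Fin n)) (c : Fin n → Fin n) (j v : Fin n) :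
    Function.update (fun i => π (c i)) j (π v) = fun i => π (Function.update c j v i) := by
  funext i
  by_cases h : i = j
  · subst h; simp
  · simp [Function.update_of_ne h]

lemma update_dep {n : ℕ} {A : Finset (Fin n)} {j : Fin n} {F : (Fin n → Fin n) → ℝ}
    (hF : Dep (insert j A) F) (c c' : Fin n → Fin n) (v : Fin n) (h : ∀ i ∈ A, c i = c' i) :
    F (Function.update c j v) = F (Function.update c' j v) := by
  apply hF
  intro i hi
  by_cases hji : i = j
  · subst hji; simp
  · rw [Function.update_of_ne hji, Function.update_of_ne hji]
    exact h i (Finset.mem_of_mem_insert_of_ne hi hji)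

lemma hA_PJ {n : ℕ} (k m : ℝ) (A : Finset (Fin n)) (j : Fin n)
    (F : (Fin n → Fin n) → ℝ) (hF : PJ (insert j A) F) : PJ A (hA k m A j F) := by
  constructor
  · intro c c' h
    unfold hA
    apply Finset.sum_congr rfl
    intro v _
    rw [show q k m A c v = q k m A c' v from q_dep k m A v c c' h, update_dep hF.1 c c' v h]
  · intro π c
    unfold hA
    rw [← Equiv.sum_comp π]
    apply Finset.sum_congr rfl
    intro v _
    rw [q_perm, update_perm, hF.2]

lemma repl_PJ {n : ℕ} (A : Finset (Fin n)) (j i : Fin n)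
    (F : (Fin n → Fin n) → ℝ) (hF : PJ (insert j A) F) : PJ (insert i A) (repl j i F) := by
  constructor
  · intro c c' h
    unfold repl
    rw [h i (Finset.mem_insert_self _ _)]
    exact update_dep hF.1 c c' _ (fun a ha => h a (Finset.mem_insert_of_mem ha))
  · intro π c
    unfold repl
    rw [update_perm, hF.2]

/-- Colours not used on `A` are interchangeable. -/
lemma new_const {n : ℕ} (A : Finset (Fin n)) (j : Fin n) (hj : j ∉ A)
    (F : (Fin n → Fin n) → ℝ) (hF : PJ (insert j A) F) (c : Fin n → Fin n) (v w : Fin n)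
    (hv : v ∉ A.image c) (hw : w ∉ A.image c) :
    F (Function.update c j v) = F (Function.update c j w) := by
  rw [← hF.2 (Equiv.swap v w) (Function.update c j v)]
  apply hF.1
  intro i hi
  by_cases hji : i = j
  · subst hji; simp
  · rw [Function.update_of_ne hji, Function.update_of_ne hji]
    have hiA := Finset.mem_of_mem_insert_of_ne hi hji
    apply Equiv.swap_apply_of_ne_of_ne
    · rintro rfl; exact hv (Finset.mem_image_of_mem _ hiA)
    · rintro rfl; exact hw (Finset.mem_image_of_mem _ hiA)

lemma hA_split {n : ℕ} (k m : ℝ) (hkm : k * m = n) (A U : Finset (Fin n)) (hAU : A ⊆ U)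
    (hU : U.card < n) (j : Fin n) (hj : j ∉ A)
    (F : (Fin n → Fin n) → ℝ) (hF : PJ (insert j A) F) (c : Fin n → Fin n) :
    ∑ i ∈ U \ A, repl j i F c + ∑ v, q k m U c v * F (Function.update c j v)
      = hA k m A j F c := by
  have hAn : A.card < n := lt_of_le_of_lt (Finset.card_le_card hAU) hU
  have h1 : ∑ i ∈ U \ A, repl j i F c = ∑ v, bb (U \ A) c v * F (Function.update c j v) := by
    unfold bb repl
    rw [← Finset.sum_fiberwise (U \ A) c]
    apply Finset.sum_congr rfl
    intro v _
    rw [← nsmul_eq_mul, ← Finset.sum_const]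
    apply Finset.sum_congr rfl
    intro i hi
    rw [(Finset.mem_filter.1 hi).2]
  have hbb : ∀ v, bb U c v = bb (U \ A) c v + bb A c v := by
    intro v
    unfold bb
    rw [← Finset.card_union_of_disjoint]
    · rw [← Finset.filter_union, Finset.sdiff_union_of_subset hAU]
    · exact Finset.disjoint_filter_filter Finset.sdiff_disjoint
  have hsum : ∑ v, ((bb (U \ A) c v : ℝ) + q k m U c v - q k m A c v) = 0 := by
    rw [Finset.sum_sub_distrib, Finset.sum_add_distrib, sum_q k m hkm U c hU,
      sum_q k m hkm A c hAn]
    have h2 : ∑ v, bb (U \ A) c v = (U \ A).card := by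
      unfold bb
      exact (Finset.card_eq_sum_card_fiberwise (by intro x _; simp)).symm
    have h3 : ∑ v, (bb (U \ A) c v : ℝ) = (U \ A).card := by exact_mod_cast h2
    rw [h3, Finset.card_sdiff_of_subset hAU, Nat.cast_sub (Finset.card_le_card hAU)]
    ring
  obtain ⟨w, hw⟩ : ∃ w, w ∉ A.image c := by
    by_contra! h
    have h2 : A.image c = univ := Finset.eq_univ_iff_forall.2 h
    have h3 : (A.image c).card ≤ A.card := Finset.card_image_le
    rw [h2] at h3
    simp at h3
    omega
  rw [h1]
  unfold hA
  rw [← sub_eq_zero, ← Finset.sum_add_distrib, ← Finset.sum_sub_distrib]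
  have h4 : ∀ v, (bb (U \ A) c v : ℝ) * F (Function.update c j v)
      + q k m U c v * F (Function.update c j v) - q k m A c v * F (Function.update c j v)
      = ((bb (U \ A) c v : ℝ) + q k m U c v - q k m A c v) * F (Function.update c j w) := by
    intro v
    by_cases hv : v ∈ A.image c
    · have hv' : v ∈ U.image c := Finset.image_subset_image hAU hv
      simp only [q, hv, hv', if_true, hbb]
      push_cast
      ring
    · rw [new_const A j hj F hF c v w hv hw]
      ring
  simp only [h4]
  rw [← Finset.sum_mul, hsum, zero_mul]

/-- The basic null relation. -/
lemma E_null {n : ℕ} (k m : ℝ) (hkm : k * m = n) (A K : Finset (Fin n))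
    (hU : (A ∪ K).card < n) (j : Fin n) (hj : j ∉ A)
    (F f : (Fin n → Fin n) → ℝ) (hF : PJ (insert j A) F) (hf : Dep K f) :
    ∑ i ∈ Aᶜ, E k m (f * repl j i F) = E k m (f * hA k m A j F) := by
  set U := A ∪ K with hUdef
  have hAU : A ⊆ U := Finset.subset_union_left
  have hKU : K ⊆ U := Finset.subset_union_right
  have h5 : (n : ℝ) - U.card ≠ 0 := by
    have : (U.card : ℝ) < n := by exact_mod_cast hU
    linarith
  have h1 : ∀ i ∈ Uᶜ, E k m (f * repl j i F)
      = E k m (f * fun c => ∑ v, q k m U c v * F (Function.update c j v))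
        / ((n : ℝ) - U.card) := by
    intro i hi
    rw [Finset.mem_compl] at hi
    have hiK : i ∉ K := fun h => hi (hKU h)
    have hiA : i ∉ A := fun h => hi (hAU h)
    rw [E_step k m hkm U i hi hU]
    · congr 2
      funext c
      simp only [Pi.mul_apply]
      rw [Finset.mul_sum]
      apply Finset.sum_congr rfl
      intro v _
      rw [hf.update hiK]
      unfold repl
      rw [Function.update_self, update_dep hF.1 (Function.update c i v) c v]
      · ring
      · intro a ha
        rw [Function.update_of_ne]
        rintro rfl
        exact hiA ha
    · intro c c' h
      simp only [Pi.mul_apply]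
      rw [hf c c' (fun a ha => h a (Finset.mem_insert_of_mem (hKU ha))),
        (repl_PJ A j i F hF).1 c c'
          (fun a ha => h a (Finset.insert_subset_insert i hAU ha))]
  have h2 : (Aᶜ : Finset (Fin n)) = (U \ A) ∪ Uᶜ := by
    ext x
    simp only [Finset.mem_compl, Finset.mem_union, Finset.mem_sdiff]
    constructor
    · intro hx
      by_cases hxU : x ∈ U
      · exact Or.inl ⟨hxU, hx⟩
      · exact Or.inr hxU
    · rintro (h | h)
      · exact h.2
      · exact fun hx => h (hAU hx)
  rw [h2, Finset.sum_union, Finset.sum_congr rfl h1, Finset.sum_const, Finset.card_compl,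
    Fintype.card_fin, nsmul_eq_mul, Nat.cast_sub hU.le, mul_div_cancel₀ _ h5, ← map_sum,
    ← map_add]
  · congr 1
    funext c
    simp only [Pi.add_apply, Pi.mul_apply, Finset.sum_apply]
    rw [← hA_split k m hkm A U hAU hU j hj F hF c, ← Finset.mul_sum]
    ring
  · rw [Finset.disjoint_left]
    intro x hx hx'
    exact (Finset.mem_compl.1 hx') (Finset.mem_sdiff.1 hx).1

/-- Permutations fixing `I` pointwise. -/
def HH {n : ℕ} (I : Finset (Fin n)) : Finset (Equiv.Perm (Fin n)) :=
  univ.filter (fun σ => ∀ i ∈ I, σ i = i)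

lemma mem_HH {n : ℕ} {I : Finset (Fin n)} {σ : Equiv.Perm (Fin n)} :
    σ ∈ HH I ↔ ∀ i ∈ I, σ i = i := by simp [HH]

noncomputable def Avg {n : ℕ} (I : Finset (Fin n)) (F : (Fin n → Fin n) → ℝ) :
    (Fin n → Fin n) → ℝ :=
  ∑ σ ∈ HH I, fun c => F (fun i => c (σ i))

lemma Avg_swap {n : ℕ} (I : Finset (Fin n)) (F : (Fin n → Fin n) → ℝ)
    (τ : Equiv.Perm (Fin n)) (hτ : τ ∈ HH I) :
    Avg I (fun c => F (fun i => c (τ i))) = Avg I F := by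
  unfold Avg
  apply Finset.sum_equiv (Equiv.mulRight τ)
  · intro σ
    rw [mem_HH] at hτ
    simp only [mem_HH, Equiv.coe_mulRight, Equiv.Perm.mul_apply]
    constructor
    · intro h i hi
      rw [hτ i hi, h i hi]
    · intro h i hi
      have := h i hi
      rwa [hτ i hi] at this
  · intro σ _
    rfl

lemma E_mul_Avg {n : ℕ} (k m : ℝ) (I : Finset (Fin n)) (f F : (Fin n → Fin n) → ℝ) :
    E k m (f * Avg I F) = ∑ σ ∈ HH I, E k m ((fun c : Fin n → Fin n => f (fun i => c (σ⁻¹ i))) * F) := by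
  unfold Avg
  rw [Finset.mul_sum, map_sum]
  apply Finset.sum_congr rfl
  intro σ _
  refine Eq.trans ?_ (E_perm k m σ
    ((fun c : Fin n → Fin n => f (fun i => c (σ⁻¹ i))) * F))
  congr 1
  funext c
  simp

lemma PJ_perm {n : ℕ} (σ : Equiv.Perm (Fin n)) (K : Finset (Fin n))
    (f : (Fin n → Fin n) → ℝ) (hf : PJ K f) :
    PJ (K.image σ) (fun c => f (fun i => c (σ i))) := by
  constructor
  · intro c c' h
    apply hf.1
    intro i hi
    exact h _ (Finset.mem_image_of_mem _ hi)
  · intro π c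
    exact hf.2 π _

lemma PJ.smul {n : ℕ} {K : Finset (Fin n)} {f : (Fin n → Fin n) → ℝ} (hf : PJ K f) (a : ℝ) :
    PJ K (a • f) := by
  constructor
  · intro c c' h
    simp only [Pi.smul_apply, hf.1 c c' h]
  · intro π c
    simp only [Pi.smul_apply, hf.2 π c]

lemma PJ.sub {n : ℕ} {K : Finset (Fin n)} {f g : (Fin n → Fin n) → ℝ} (hf : PJ K f)
    (hg : PJ K g) : PJ K (f - g) := by
  constructor
  · intro c c' h
    simp only [Pi.sub_apply, hf.1 c c' h, hg.1 c c' h]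
  · intro π c
    simp only [Pi.sub_apply, hf.2 π c, hg.2 π c]

lemma PJ.sum {n : ℕ} {K : Finset (Fin n)} {ι : Type*} (T : Finset ι)
    (f : ι → (Fin n → Fin n) → ℝ) (hf : ∀ i ∈ T, PJ K (f i)) : PJ K (∑ i ∈ T, f i) := by
  constructor
  · intro c c' h
    simp only [Finset.sum_apply]
    exact Finset.sum_congr rfl (fun i hi => (hf i hi).1 c c' h)
  · intro π c
    simp only [Finset.sum_apply]
    exact Finset.sum_congr rfl (fun i hi => (hf i hi).2 π c)

/-- Symmetrised low-degree functions are equivalent to functions of the pattern on `I`. -/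
lemma claim {n : ℕ} (k m : ℝ) (hkm : k * m = n) (s : ℕ) (hs : 2 * s ≤ n)
    (I : Finset (Fin n)) (hI : I.card ≤ s) (t : ℕ) :
    ∀ (J : Finset (Fin n)) (F : (Fin n → Fin n) → ℝ), J.card ≤ s → PJ J F → (J \ I).card = t →
    ∃ h, PJ I h ∧ ∀ (K : Finset (Fin n)) (f : (Fin n → Fin n) → ℝ), K.card ≤ s → PJ K f →
      E k m (f * Avg I F) = E k m (f * h) := by
  induction t with
  | zero =>
    intro J F hJ hF ht
    have hJI : J ⊆ I := by
      rwa [Finset.card_eq_zero, Finset.sdiff_eq_empty_iff_subset] at ht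
    refine ⟨((HH I).card : ℝ) • F, (hF.mono hJI).smul _, ?_⟩
    intro K f _ _
    congr 2
    unfold Avg
    rw [Finset.sum_congr rfl (g := fun _ => F)]
    · rw [Finset.sum_const, Nat.cast_smul_eq_nsmul]
    · intro σ hσ
      funext c
      apply hF.1
      intro i hi
      rw [mem_HH.1 hσ i (hJI hi)]
  | succ t ih =>
    intro J F hJ hF ht
    obtain ⟨j, hj⟩ : (J \ I).Nonempty := by
      rw [← Finset.card_pos]; omega
    obtain ⟨hjJ, hjI⟩ := Finset.mem_sdiff.1 hj
    set A := J.erase j with hAdef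
    have hjA : j ∉ A := Finset.notMem_erase j J
    have hins : insert j A = J := Finset.insert_erase hjJ
    have hAc : A.card + 1 = J.card := Finset.card_erase_add_one hjJ
    have hF' : PJ (insert j A) F := by rwa [hins]
    have hAI : (A \ I).card = t := by
      have : A \ I = (J \ I).erase j := by
        ext x; simp only [hAdef, Finset.mem_sdiff, Finset.mem_erase]; tauto
      rw [this, Finset.card_erase_of_mem hj, ht]
      rfl
    obtain ⟨h0, h0P, h0E⟩ := ih A (hA k m A j F) (by omega) (hA_PJ k m A j F hF') hAI
    have hex : ∀ i ∈ I \ A, ∃ h, PJ I h ∧ ∀ (K : Finset (Fin n)) (f : (Fin n → Fin n) → ℝ),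
        K.card ≤ s → PJ K f → E k m (f * Avg I (repl j i F)) = E k m (f * h) := by
      intro i hi
      obtain ⟨hiI, hiA⟩ := Finset.mem_sdiff.1 hi
      apply ih (insert i A) (repl j i F) _ (repl_PJ A j i F hF')
      · rw [Finset.insert_sdiff_of_mem _ hiI, hAI]
      · rw [Finset.card_insert_of_notMem hiA]; omega
    choose! hh hhP hhE using hex
    have hcard : (I ∪ A).card < n := by
      have := Finset.card_union_le I A
      omega
    have hne : (n : ℝ) - (I ∪ A).card ≠ 0 := by
      have : ((I ∪ A).card : ℝ) < n := by exact_mod_cast hcard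
      linarith
    refine ⟨((n : ℝ) - (I ∪ A).card)⁻¹ • (h0 - ∑ i ∈ I \ A, hh i),
      (h0P.sub (PJ.sum _ _ hhP)).smul _, ?_⟩
    intro K f hK hf
    have hmain : ∑ i ∈ Aᶜ, E k m (f * Avg I (repl j i F))
        = E k m (f * Avg I (hA k m A j F)) := by
      simp only [E_mul_Avg]
      rw [Finset.sum_comm]
      apply Finset.sum_congr rfl
      intro σ _
      have hcK : (K.image (σ⁻¹ : Equiv.Perm (Fin n))).card ≤ s :=
        le_trans Finset.card_image_le hK
      apply E_null k m hkm A (K.image (σ⁻¹ : Equiv.Perm (Fin n))) _ j hjA F _ hF'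
        (PJ_perm σ⁻¹ K f hf).1
      have := Finset.card_union_le A (K.image (σ⁻¹ : Equiv.Perm (Fin n)))
      omega
    have hout : ∀ i ∈ (I ∪ A)ᶜ, Avg I (repl j i F) = Avg I F := by
      intro i hi
      have hiI : i ∉ I := fun h => (Finset.mem_compl.1 hi) (Finset.mem_union_left _ h)
      have hiA : i ∉ A := fun h => (Finset.mem_compl.1 hi) (Finset.mem_union_right _ h)
      rw [← Avg_swap I F (Equiv.swap i j)]
      · congr 1
        funext c
        apply hF'.1
        intro a ha
        by_cases haj : a = j
        · subst haj; simp
        · have haA := Finset.mem_of_mem_insert_of_ne ha haj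
          have hai : a ≠ i := by rintro rfl; exact hiA haA
          rw [Function.update_of_ne haj, Equiv.swap_apply_of_ne_of_ne hai haj]
      · rw [mem_HH]
        intro a ha
        apply Equiv.swap_apply_of_ne_of_ne
        · rintro rfl; exact hiI ha
        · rintro rfl; exact hjI ha
    have hsplit : (Aᶜ : Finset (Fin n)) = (I \ A) ∪ (I ∪ A)ᶜ := by
      ext x
      simp only [Finset.mem_compl, Finset.mem_union, Finset.mem_sdiff]
      tauto
    have hdis : Disjoint (I \ A) (I ∪ A)ᶜ := by
      rw [Finset.disjoint_left]
      intro x hx hx'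
      exact (Finset.mem_compl.1 hx') (Finset.mem_union_left _ (Finset.mem_sdiff.1 hx).1)
    have hout' : ∑ i ∈ (I ∪ A)ᶜ, E k m (f * Avg I (repl j i F))
        = ∑ i ∈ (I ∪ A)ᶜ, E k m (f * Avg I F) :=
      Finset.sum_congr rfl (fun i hi => by rw [hout i hi])
    rw [hsplit, Finset.sum_union hdis, h0E K f hK hf,
      Finset.sum_congr rfl (fun i hi => hhE i hi K f hK hf),
      hout', Finset.sum_const,
      Finset.card_compl, Fintype.card_fin, nsmul_eq_mul, Nat.cast_sub hcard.le] at hmain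
    rw [mul_smul_comm, map_smul, mul_sub, map_sub, ← hmain, Finset.mul_sum, map_sum,
      smul_eq_mul, add_sub_cancel_left, inv_mul_cancel_left₀ hne]

lemma psd_of_eigen {ι : Type*} [Fintype ι] [DecidableEq ι] (A : Matrix ι ι ℝ)
    (hA : A.IsHermitian)
    (h : ∀ (l : ℝ) (v : ι → ℝ), l < 0 → A.mulVec v = l • v → v = 0) (v : ι → ℝ) :
    0 ≤ ∑ i, ∑ j, v i * A i j * v j := by
  have hp : A.PosSemidef := by
    rw [hA.posSemidef_iff_eigenvalues_nonneg]
    intro i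
    by_contra hlt
    have hlt' : hA.eigenvalues i < 0 := not_le.1 hlt
    have h1 := hA.mulVec_eigenvectorBasis i
    have h2 := h _ _ hlt' h1
    have h3 := hA.eigenvectorBasis.orthonormal.ne_zero i
    apply h3
    ext j
    exact congrFun h2 j
  have h4 := hp.dotProduct_mulVec_nonneg v
  simp only [dotProduct, Matrix.mulVec, star_trivial, Finset.mul_sum] at h4
  simpa only [mul_assoc] using h4

/-- Index type for low-degree monomials. -/
abbrev Idx (n s : ℕ) := (Fin s → Fin n) × Finset (Fin s × Fin s)

def act {n s : ℕ} (σ : Equiv.Perm (Fin n)) : Idx n s ≃ Idx n s where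
  toFun i := (fun a => σ (i.1 a), i.2)
  invFun i := (fun a => σ⁻¹ (i.1 a), i.2)
  left_inv i := by simp
  right_inv i := by simp

noncomputable def xf {n s : ℕ} (i : Idx n s) : (Fin n → Fin n) → ℝ :=
  fun c => if ∀ p ∈ i.2, c (i.1 p.1) ≠ c (i.1 p.2) then 1 else 0

lemma xf_act {n s : ℕ} (σ : Equiv.Perm (Fin n)) (i : Idx n s) :
    xf (act σ i) = fun c => xf i (fun a => c (σ a)) := rfl

lemma xf_PJ {n s : ℕ} (i : Idx n s) : PJ (univ.image i.1) (xf i) := by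
  constructor
  · intro c c' h
    have h' : ∀ a, c (i.1 a) = c' (i.1 a) := fun a => h _ (by simp)
    unfold xf
    simp only [h']
  · intro π c
    unfold xf
    simp

lemma xf_card {n s : ℕ} (i : Idx n s) : (univ.image i.1).card ≤ s :=
  le_trans Finset.card_image_le (by simp)

theorem psd {n : ℕ} (k m : ℝ) (hkm : k * m = n) (s : ℕ) (hs : 2 * s ≤ n)
    (hk : (s : ℝ) ≤ k + 1) (hm : (s : ℝ) ≤ m + 1) (v : Idx n s → ℝ) :
    0 ≤ E k m ((∑ i, v i • xf i) * (∑ i, v i • xf i)) := by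
  classical
  set A : Matrix (Idx n s) (Idx n s) ℝ := fun i j => E k m (xf i * xf j) with hAdef
  have hAapp : ∀ i j, A i j = E k m (xf i * xf j) := fun i j => rfl
  have hquad : ∀ u w : Idx n s → ℝ, E k m ((∑ i, u i • xf i) * (∑ i, w i • xf i))
      = ∑ i, ∑ j, u i * A i j * w j := by
    intro u w
    rw [Finset.sum_mul, map_sum]
    apply Finset.sum_congr rfl
    intro i _
    rw [Finset.mul_sum, map_sum]
    apply Finset.sum_congr rfl
    intro j _
    rw [smul_mul_smul_comm, map_smul, hAapp, smul_eq_mul]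
    ring
  rw [hquad]
  apply psd_of_eigen A
  · ext i j
    simp only [Matrix.conjTranspose_apply, star_trivial, hAapp, mul_comm]
  intro l v hl hv
  by_contra hv0
  obtain ⟨i₀, hi₀⟩ : ∃ i, v i ≠ 0 := by
    by_contra! h
    exact hv0 (funext h)
  set I := univ.image i₀.1 with hI
  have hIc : I.card ≤ s := xf_card i₀
  have hAinv : ∀ σ i j, A (act σ i) (act σ j) = A i j := by
    intro σ i j
    rw [hAapp, hAapp, xf_act, xf_act]
    exact E_perm k m σ (xf i * xf j)
  set v' : Idx n s → ℝ := fun j => ∑ σ ∈ HH I, v ((act σ).symm j) with hv'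
  have hAv : ∀ i, ∑ j, A i j * v j = l * v i := by
    intro i
    exact congrFun hv i
  have hAv' : ∀ i, ∑ j, A i j * v' j = l * v' i := by
    intro i
    simp only [hv', Finset.mul_sum]
    rw [Finset.sum_comm]
    apply Finset.sum_congr rfl
    intro σ _
    rw [← hAv, ← Equiv.sum_comp (act σ)]
    apply Finset.sum_congr rfl
    intro j _
    rw [Equiv.symm_apply_apply, ← hAinv σ ((act σ).symm i) j, Equiv.apply_symm_apply]
  have hneg : ∑ i, ∑ j, v' i * A i j * v' j < 0 := by
    have h1 : ∑ i, ∑ j, v' i * A i j * v' j = l * ∑ i, v' i * v' i := by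
      rw [Finset.mul_sum]
      apply Finset.sum_congr rfl
      intro i _
      simp only [mul_assoc]
      rw [← Finset.mul_sum, hAv']
      ring
    rw [h1]
    apply mul_neg_of_neg_of_pos hl
    apply Finset.sum_pos' (fun i _ => mul_self_nonneg _)
    refine ⟨i₀, Finset.mem_univ _, ?_⟩
    have h2 : v' i₀ = (HH I).card * v i₀ := by
      simp only [hv']
      rw [Finset.sum_congr rfl (g := fun _ => v i₀)]
      · simp
      · intro σ hσ
        congr 1
        rw [Equiv.symm_apply_eq]
        unfold act
        ext a
        · simp only [Equiv.coe_fn_mk]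
          rw [mem_HH.1 hσ]
          simp [hI]
        · simp
    have h3 : v' i₀ ≠ 0 := by
      rw [h2]
      apply mul_ne_zero _ hi₀
      have : (1 : Equiv.Perm (Fin n)) ∈ HH I := by simp [mem_HH]
      exact_mod_cast (Finset.card_pos.2 ⟨_, this⟩).ne'
    exact mul_self_pos.2 h3
  have hg : (∑ i, v' i • xf i) = ∑ i, v i • Avg I (xf i) := by
    simp only [hv', Avg, Finset.sum_smul, Finset.smul_sum]
    rw [Finset.sum_comm, Finset.sum_comm (s := univ)]
    apply Finset.sum_congr rfl
    intro σ _
    rw [← Equiv.sum_comp (act σ)]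
    apply Finset.sum_congr rfl
    intro j _
    rw [Equiv.symm_apply_apply, xf_act]
  have hcl := fun i : Idx n s => claim k m hkm s hs I hIc _ (univ.image i.1) (xf i) (xf_card i)
    (xf_PJ i) rfl
  choose h hP hE using hcl
  have hHP : PJ I (∑ i, v i • h i) := PJ.sum _ _ (fun i _ => (hP i).smul _)
  rw [← hquad] at hneg
  have e1 : E k m ((∑ i, v' i • xf i) * (∑ i, v' i • xf i))
      = E k m ((∑ i, v' i • xf i) * (∑ i, v i • h i)) := by
    conv_lhs => enter [2, 2]; rw [hg]
    simp only [Finset.sum_mul, Finset.mul_sum, map_sum, smul_mul_smul_comm, map_smul]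
    apply Finset.sum_congr rfl
    intro i _
    apply Finset.sum_congr rfl
    intro j _
    rw [hE _ _ _ (xf_card _) (xf_PJ _)]
  have e2 : E k m ((∑ i, v i • h i) * (∑ i, v' i • xf i))
      = E k m ((∑ i, v i • h i) * (∑ i, v i • h i)) := by
    rw [hg]
    rw [Finset.mul_sum, Finset.mul_sum, map_sum, map_sum]
    apply Finset.sum_congr rfl
    intro i _
    rw [mul_smul_comm, mul_smul_comm, map_smul, map_smul, hE i I _ hIc hHP]
  rw [e1, mul_comm, e2] at hneg
  apply absurd hneg
  rw [not_lt]
  apply E_nonneg k m hkm s hk hm I hIc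
  · intro c c' hc
    simp only [Pi.mul_apply]
    rw [hHP.1 c c' hc]
  · intro c
    exact mul_self_nonneg _

/-- The edge variables evaluated at the complete multipartite graph of a colouring. -/
noncomputable def pt {n : ℕ} (e : KEdge n) : (Fin n → Fin n) → ℝ :=
  fun c => if (e.1.image c).card = 2 then 1 else 0

noncomputable def ev (n : ℕ) : MvPolynomial (KEdge n) ℝ →ₐ[ℝ] ((Fin n → Fin n) → ℝ) :=
  MvPolynomial.aeval pt

noncomputable def mon {n : ℕ} (d : KEdge n →₀ ℕ) : (Fin n → Fin n) → ℝ :=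
  fun c => if ∀ e ∈ d.support, (e.1.image c).card = 2 then 1 else 0

def vs {n : ℕ} (d : KEdge n →₀ ℕ) : Finset (Fin n) :=
  d.support.biUnion fun e => (e : Finset (Fin n))

lemma ev_monomial {n : ℕ} (d : KEdge n →₀ ℕ) (a : ℝ) :
    ev n (monomial d a) = a • mon d := by
  unfold ev
  rw [MvPolynomial.aeval_monomial, ← Algebra.smul_def]
  congr 1
  funext c
  rw [Finsupp.prod, Finset.prod_apply]
  unfold mon
  split_ifs with h
  · apply Finset.prod_eq_one
    intro e he
    simp [pt, h e he]
  · push Not at h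
    obtain ⟨e, he, h2⟩ := h
    apply Finset.prod_eq_zero he
    rw [Finsupp.mem_support_iff] at he
    simp [pt, h2, he]

lemma ev_expand {n : ℕ} (p : MvPolynomial (KEdge n) ℝ) :
    ev n p = ∑ d ∈ p.support, p.coeff d • mon d := by
  conv_lhs => rw [p.as_sum]
  rw [map_sum]
  simp only [ev_monomial]

lemma vs_card {n : ℕ} (p : MvPolynomial (KEdge n) ℝ) (d : KEdge n →₀ ℕ)
    (hd : d ∈ p.support) : (vs d).card ≤ indexDeg p :=
  Finset.le_sup (f := fun d : KEdge n →₀ ℕ =>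
    (d.support.biUnion fun e => (e : Finset (Fin n))).card) hd

lemma mon_PJ {n : ℕ} (d : KEdge n →₀ ℕ) : PJ (vs d) (mon d) := by
  constructor
  · intro c c' h
    unfold mon
    have : ∀ e ∈ d.support, e.1.image c = e.1.image c' := by
      intro e he
      apply Finset.image_congr
      intro i hi
      exact h i (Finset.mem_biUnion.2 ⟨e, he, hi⟩)
    congr 1
    apply propext
    constructor
    · intro h1 e he
      rw [← this e he]; exact h1 e he
    · intro h1 e he
      rw [this e he]; exact h1 e he
  · intro π c
    unfold mon
    have : ∀ e : KEdge n, (e.1.image (fun i => π (c i))).card = (e.1.image c).card := by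
      intro e
      rw [← Finset.card_image_of_injective (e.1.image c) π.injective, Finset.image_image]
      rfl
    simp only [this]

lemma mon_xf {n s : ℕ} (hsn : s ≤ n) (d : KEdge n →₀ ℕ) (hd : (vs d).card ≤ s) :
    ∃ i : Idx n s, mon d = xf i := by
  classical
  obtain ⟨J, hJ, hJc⟩ := Finset.exists_superset_card_eq hd (by simpa using hsn)
  let φ : Fin s → Fin n := J.orderEmbOfFin hJc
  have hφ : ∀ x ∈ J, ∃ a, φ a = x := by
    intro x hx
    have : x ∈ Set.range (J.orderEmbOfFin hJc) := by
      rw [Finset.range_orderEmbOfFin]; exact hx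
    exact this
  refine ⟨(φ, univ.filter (fun p => ∃ e ∈ d.support, e.1 = {φ p.1, φ p.2})), ?_⟩
  funext c
  unfold mon xf
  congr 1
  apply propext
  constructor
  · intro h p hp heq
    obtain ⟨e, he, hep⟩ := (Finset.mem_filter.1 hp).2
    have h2 := h e he
    rw [hep] at h2
    simp only at heq
    simp [heq] at h2
  · intro h e he
    obtain ⟨x, y, hxy, hexy⟩ := Finset.card_eq_two.1 e.2
    have hxJ : x ∈ J := hJ (Finset.mem_biUnion.2 ⟨e, he, by simp [hexy]⟩)
    have hyJ : y ∈ J := hJ (Finset.mem_biUnion.2 ⟨e, he, by simp [hexy]⟩)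
    obtain ⟨a, ha⟩ := hφ x hxJ
    obtain ⟨b, hb⟩ := hφ y hyJ
    have h2 := h (a, b) (by
      rw [Finset.mem_filter]
      refine ⟨Finset.mem_univ _, e, he, ?_⟩
      simp only [ha, hb]
      exact hexy)
    simp only [ha, hb] at h2
    rw [hexy, Finset.image_insert, Finset.image_singleton]
    exact Finset.card_pair h2

lemma ev_span {n s : ℕ} (hsn : s ≤ n) (p : MvPolynomial (KEdge n) ℝ) (hp : indexDeg p ≤ s) :
    ∃ v : Idx n s → ℝ, ev n p = ∑ i, v i • xf i := by
  classical
  have h : ∀ d ∈ p.support, ∃ i : Idx n s, mon d = xf i :=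
    fun d hd => mon_xf hsn d (le_trans (vs_card p d hd) hp)
  have hmem : ev n p ∈ Submodule.span ℝ (Set.range (xf : Idx n s → _)) := by
    rw [ev_expand]
    apply Submodule.sum_mem
    intro d hd
    obtain ⟨i, hi⟩ := h d hd
    rw [hi]
    exact Submodule.smul_mem _ _ (Submodule.subset_span ⟨i, rfl⟩)
  rw [Submodule.mem_span_range_iff_exists_fun] at hmem
  obtain ⟨v, hv⟩ := hmem
  exact ⟨v, hv.symm⟩

lemma E_mul_zero {n t : ℕ} (k m : ℝ) (p : MvPolynomial (KEdge n) ℝ) (hp : indexDeg p ≤ t)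
    (G : (Fin n → Fin n) → ℝ)
    (hG : ∀ (U : Finset (Fin n)) (F : (Fin n → Fin n) → ℝ), U.card ≤ t → PJ U F →
      E k m (F * G) = 0) : E k m (ev n p * G) = 0 := by
  rw [ev_expand, Finset.sum_mul, map_sum]
  apply Finset.sum_eq_zero
  intro d hd
  rw [smul_mul_assoc, map_smul, hG (vs d) (mon d) (le_trans (vs_card p d hd) hp) (mon_PJ d),
    smul_zero]

/-- Deviation of the class size of `a` from `m`. -/
noncomputable def DD {n : ℕ} (m : ℝ) (a : Fin n) : (Fin n → Fin n) → ℝ :=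
  fun c => (∑ i, if c i = c a then (1 : ℝ) else 0) - m

lemma E_DD {n : ℕ} (k m : ℝ) (hkm : k * m = n) (U : Finset (Fin n)) (a : Fin n)
    (hU : (insert a U).card < n) (F : (Fin n → Fin n) → ℝ) (hF : Dep U F) :
    E k m (F * DD m a) = 0 :=
  E_deg k m hkm (insert a U) a (Finset.mem_insert_self _ _) hU F
    (hF.mono (Finset.subset_insert _ _))

lemma sum_edges {n : ℕ} (c : Fin n → Fin n) :
    2 * ∑ e : KEdge n, pt e c = ∑ a, ∑ i, (1 - if c i = c a then (1 : ℝ) else 0) := by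
  classical
  have h1 : ∑ e : KEdge n, pt e c
      = ∑ S ∈ univ.filter (fun S : Finset (Fin n) => S.card = 2),
        if (S.image c).card = 2 then (1 : ℝ) else 0 := by
    rw [← Finset.sum_subtype_eq_sum_filter]
    simp only [Finset.subtype_univ]
    rfl
  have h2 : ∑ a, ∑ i, (1 - if c i = c a then (1 : ℝ) else 0)
      = ∑ p ∈ univ.filter (fun p : Fin n × Fin n => c p.1 ≠ c p.2), (1 : ℝ) := by
    rw [Finset.sum_filter, Fintype.sum_prod_type]
    apply Finset.sum_congr rfl
    intro a _
    apply Finset.sum_congr rfl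
    intro i _
    by_cases h : c i = c a
    · simp [h]
    · simp [h, Ne.symm h]
  rw [h1, h2, ← Finset.sum_fiberwise_of_maps_to
    (t := univ.filter (fun S : Finset (Fin n) => S.card = 2))
    (g := fun p : Fin n × Fin n => ({p.1, p.2} : Finset (Fin n))), Finset.mul_sum]
  · apply Finset.sum_congr rfl
    intro S hS
    obtain ⟨x, y, hxy, rfl⟩ := Finset.card_eq_two.1 (Finset.mem_filter.1 hS).2
    rw [Finset.image_insert, Finset.image_singleton]
    by_cases hc : c x = c y
    · have : (univ.filter (fun p : Fin n × Fin n => c p.1 ≠ c p.2)).filter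
          (fun p => ({p.1, p.2} : Finset (Fin n)) = {x, y}) = ∅ := by
        ext ⟨a, b⟩
        simp only [Finset.mem_filter, Finset.mem_univ, true_and, Finset.notMem_empty, iff_false,
          Finset.ext_iff, Finset.mem_insert, Finset.mem_singleton]
        rintro ⟨h3, h4⟩
        rcases (h4 a).1 (Or.inl rfl) with rfl | rfl <;>
          rcases (h4 b).1 (Or.inr rfl) with rfl | rfl <;> simp_all
      rw [this]
      simp [hc]
    · have : (univ.filter (fun p : Fin n × Fin n => c p.1 ≠ c p.2)).filter
          (fun p => ({p.1, p.2} : Finset (Fin n)) = {x, y}) = {(x, y), (y, x)} := by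
        ext ⟨a, b⟩
        simp only [Finset.mem_filter, Finset.mem_univ, true_and, Finset.mem_insert,
          Finset.mem_singleton, Prod.mk.injEq]
        constructor
        · rintro ⟨h3, h4⟩
          have h5 : a ∈ ({x, y} : Finset (Fin n)) := by rw [← h4]; simp
          have h6 : b ∈ ({x, y} : Finset (Fin n)) := by rw [← h4]; simp
          simp only [Finset.mem_insert, Finset.mem_singleton] at h5 h6
          rcases h5 with rfl | rfl <;> rcases h6 with rfl | rfl <;> simp_all
        · rintro (⟨rfl, rfl⟩ | ⟨rfl, rfl⟩)
          · exact ⟨hc, rfl⟩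
          · exact ⟨Ne.symm hc, Finset.pair_comm _ _⟩
      rw [this, Finset.card_pair hc, Finset.sum_pair]
      · norm_num
      · simp [hxy]
  · rintro ⟨a, b⟩ hp
    simp only [Finset.mem_filter, Finset.mem_univ, true_and] at hp ⊢
    apply Finset.card_pair
    rintro rfl
    exact hp rfl

/-- The triangle monomial. -/
lemma pt_triangle {n : ℕ} (S : Finset (Fin n)) (hS : S.card = 3) (c : Fin n → Fin n) :
    ∏ e ∈ univ.filter (fun e : KEdge n => (e : Finset (Fin n)) ⊆ S), pt e c
      = if (S.image c).card = 3 then 1 else 0 := by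
  split_ifs with h
  · apply Finset.prod_eq_one
    intro e he
    have hinj : Set.InjOn c S := by
      rw [← Finset.card_image_iff, h, hS]
    have hes : e.1 ⊆ S := (Finset.mem_filter.1 he).2
    unfold pt
    rw [if_pos]
    rw [Finset.card_image_of_injOn (hinj.mono (by exact_mod_cast hes)), e.2]
  · have : ¬ Set.InjOn c S := by
      intro hinj
      rw [Finset.card_image_of_injOn hinj] at h
      exact h hS
    simp only [Set.InjOn] at this
    push Not at this
    obtain ⟨x, hx, y, hy, hxy, hne⟩ := this
    apply Finset.prod_eq_zero (i := ⟨{x, y}, Finset.card_pair hne⟩)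
    · rw [Finset.mem_filter]
      refine ⟨Finset.mem_univ _, ?_⟩
      intro z hz
      simp only [Finset.mem_insert, Finset.mem_singleton] at hz
      rcases hz with rfl | rfl
      · exact hx
      · exact hy
    · simp [pt, hxy]

lemma sum_triangles {n : ℕ} (c : Fin n → Fin n) :
    6 * ∑ S ∈ univ.filter (fun S : Finset (Fin n) => S.card = 3),
        ∏ e ∈ univ.filter (fun e : KEdge n => (e : Finset (Fin n)) ⊆ S), pt e c
      = ∑ a, ∑ i, ∑ j, (if c i ≠ c a ∧ c j ≠ c a ∧ c i ≠ c j then (1 : ℝ) else 0) := by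
  classical
  have h2 : ∑ a, ∑ i, ∑ j, (if c i ≠ c a ∧ c j ≠ c a ∧ c i ≠ c j then (1 : ℝ) else 0)
      = ∑ p ∈ univ.filter (fun p : Fin n × Fin n × Fin n =>
        c p.2.1 ≠ c p.1 ∧ c p.2.2 ≠ c p.1 ∧ c p.2.1 ≠ c p.2.2), (1 : ℝ) := by
    rw [Finset.sum_filter, Fintype.sum_prod_type]
    apply Finset.sum_congr rfl
    intro a _
    rw [Fintype.sum_prod_type]
  rw [h2, ← Finset.sum_fiberwise_of_maps_to
    (t := univ.filter (fun S : Finset (Fin n) => S.card = 3))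
    (g := fun p : Fin n × Fin n × Fin n => ({p.1, p.2.1, p.2.2} : Finset (Fin n))),
    Finset.mul_sum]
  · apply Finset.sum_congr rfl
    intro S hS
    have hS3 := (Finset.mem_filter.1 hS).2
    rw [pt_triangle S hS3]
    obtain ⟨x, y, z, hxy, hxz, hyz, rfl⟩ := Finset.card_eq_three.1 hS3
    rw [Finset.image_insert, Finset.image_insert, Finset.image_singleton]
    by_cases hc : c x ≠ c y ∧ c x ≠ c z ∧ c y ≠ c z
    · obtain ⟨h1, h3, h4⟩ := hc
      have : (univ.filter (fun p : Fin n × Fin n × Fin n =>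
          c p.2.1 ≠ c p.1 ∧ c p.2.2 ≠ c p.1 ∧ c p.2.1 ≠ c p.2.2)).filter
          (fun p => ({p.1, p.2.1, p.2.2} : Finset (Fin n)) = {x, y, z})
          = {(x, y, z), (x, z, y), (y, x, z), (y, z, x), (z, x, y), (z, y, x)} := by
        ext ⟨a, b, d⟩
        simp only [Finset.mem_filter, Finset.mem_univ, true_and, Finset.mem_insert,
          Finset.mem_singleton, Prod.mk.injEq]
        constructor
        · rintro ⟨h5, h6⟩
          have ha : a ∈ ({x, y, z} : Finset (Fin n)) := by rw [← h6]; simp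
          have hb : b ∈ ({x, y, z} : Finset (Fin n)) := by rw [← h6]; simp
          have hd : d ∈ ({x, y, z} : Finset (Fin n)) := by rw [← h6]; simp
          simp only [Finset.mem_insert, Finset.mem_singleton] at ha hb hd
          clear h6
          grind
        · intro h
          refine ⟨by grind, ?_⟩
          ext w
          simp only [Finset.mem_insert, Finset.mem_singleton]
          grind
      have h5 : ({c x, c y, c z} : Finset (Fin n)).card = 3 :=
        Finset.card_eq_three.2 ⟨_, _, _, h1, h3, h4, rfl⟩
      have h6 : ({(x, y, z), (x, z, y), (y, x, z), (y, z, x), (z, x, y), (z, y, x)} :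
          Finset (Fin n × Fin n × Fin n)).card = 6 := by
        have hyx := Ne.symm hxy
        have hzx := Ne.symm hxz
        have hzy := Ne.symm hyz
        simp [Finset.card_insert_of_notMem, *]
      rw [this, if_pos h5, Finset.sum_const, h6]
      norm_num
    · have : (univ.filter (fun p : Fin n × Fin n × Fin n =>
          c p.2.1 ≠ c p.1 ∧ c p.2.2 ≠ c p.1 ∧ c p.2.1 ≠ c p.2.2)).filter
          (fun p => ({p.1, p.2.1, p.2.2} : Finset (Fin n)) = {x, y, z}) = ∅ := by
        rw [Finset.filter_eq_empty_iff]
        rintro ⟨a, b, d⟩ hp h6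
        simp only [Finset.mem_filter, Finset.mem_univ, true_and] at hp h6
        have ha : x ∈ ({a, b, d} : Finset (Fin n)) := by rw [h6]; simp
        have hb : y ∈ ({a, b, d} : Finset (Fin n)) := by rw [h6]; simp
        have hd : z ∈ ({a, b, d} : Finset (Fin n)) := by rw [h6]; simp
        simp only [Finset.mem_insert, Finset.mem_singleton] at ha hb hd
        clear h6 hS hS3
        grind
      have h5 : ({c x, c y, c z} : Finset (Fin n)).card ≠ 3 := by
        intro h
        apply hc
        rw [Finset.card_eq_three] at h
        obtain ⟨u, v, w, huv, huw, hvw, h7⟩ := h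
        have ha : u ∈ ({c x, c y, c z} : Finset (Fin n)) := by rw [h7]; simp
        have hb : v ∈ ({c x, c y, c z} : Finset (Fin n)) := by rw [h7]; simp
        have hd : w ∈ ({c x, c y, c z} : Finset (Fin n)) := by rw [h7]; simp
        simp only [Finset.mem_insert, Finset.mem_singleton] at ha hb hd
        clear h7 hS hS3 this hc
        grind
      rw [this, if_neg h5]
      simp
  · rintro ⟨a, b, d⟩ hp
    simp only [Finset.mem_filter, Finset.mem_univ, true_and] at hp ⊢
    apply Finset.card_eq_three.2
    refine ⟨a, b, d, ?_, ?_, ?_, rfl⟩ <;> rintro rfl <;> simp at hp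

lemma E_density {n : ℕ} (k m : ℝ) (hkm : k * m = n) (R : ℝ) (hR : 2 * R = n * (n - m))
    (U : Finset (Fin n)) (F : (Fin n → Fin n) → ℝ) (hU : U.card + 2 ≤ n) (hF : PJ U F) :
    E k m (F * fun c => (∑ e : KEdge n, pt e c) - R) = 0 := by
  have h1 : (F * fun c => (∑ e : KEdge n, pt e c) - R)
      = (-1 / 2 : ℝ) • ∑ a, F * DD m a := by
    funext c
    have h2 := sum_edges c
    have h3 : ∑ a, ∑ i, (1 - if c i = c a then (1 : ℝ) else 0)
        = n * (n - m) - ∑ a, DD m a c := by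
      unfold DD
      simp only [Finset.sum_sub_distrib, Finset.sum_const, Finset.card_univ, Fintype.card_fin,
        nsmul_eq_mul]
      ring
    rw [h3] at h2
    simp only [Pi.mul_apply, Pi.smul_apply, Finset.sum_apply, smul_eq_mul]
    rw [← Finset.mul_sum]
    have h4 : (∑ e : KEdge n, pt e c) - R = (-1 / 2) * ∑ a, DD m a c := by linarith
    rw [h4]
    ring
  rw [h1, map_smul, map_sum, Finset.sum_eq_zero, smul_zero]
  intro a _
  apply E_DD k m hkm U a _ F hF.1
  have := Finset.card_insert_le a U
  omega

lemma triangle_pointwise {n : ℕ} (m : ℝ) (c : Fin n → Fin n) :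
    ∑ a, ∑ i, ∑ j, (if c i ≠ c a ∧ c j ≠ c a ∧ c i ≠ c j then (1 : ℝ) else 0)
      - n * (n - m) * (n - 2 * m)
      = ∑ a, ((2 * m - 3 * n) * DD m a c
        + ∑ i, 2 * ((if c i = c a then (1 : ℝ) else 0) * DD m a c)) := by
  have h1 : ∀ a i j, (if c i ≠ c a ∧ c j ≠ c a ∧ c i ≠ c j then (1 : ℝ) else 0)
      = 1 - (if c i = c a then (1 : ℝ) else 0) - (if c j = c a then (1 : ℝ) else 0)
        - (if c j = c i then (1 : ℝ) else 0)
        + 2 * ((if c i = c a then (1 : ℝ) else 0) * (if c j = c a then (1 : ℝ) else 0)) := by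
    intro a i j
    by_cases h1 : c i = c a <;> by_cases h2 : c j = c a <;> by_cases h3 : c j = c i <;>
      simp_all [eq_comm] <;> norm_num
  set N : Fin n → ℝ := fun a => ∑ i, if c i = c a then (1 : ℝ) else 0 with hN
  have h2 : ∀ a, ∑ i, ∑ j, (if c i ≠ c a ∧ c j ≠ c a ∧ c i ≠ c j then (1 : ℝ) else 0)
      = (n : ℝ) * n - n * N a - n * N a - ∑ i, N i + 2 * (N a * N a) := by
    intro a
    simp only [h1]
    simp only [Finset.sum_add_distrib, Finset.sum_sub_distrib, ← Finset.mul_sum, ← Finset.sum_mul,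
      Finset.sum_const, Finset.card_univ, Fintype.card_fin, nsmul_eq_mul, hN]
    ring
  have h3 : ∀ a, DD m a c = N a - m := fun a => rfl
  simp only [h2, h3]
  simp only [← Finset.mul_sum, ← Finset.sum_mul]
  have h4 : ∀ a, (2 * m - 3 * n) * (N a - m)
      + 2 * ((∑ i, if c i = c a then (1 : ℝ) else 0) * (N a - m))
      = 2 * (N a * N a) - 3 * n * N a - (2 * m - 3 * n) * m := by
    intro a
    rw [show (∑ i, if c i = c a then (1 : ℝ) else 0) = N a from rfl]
    ring
  simp only [h4]
  simp only [Finset.sum_add_distrib, Finset.sum_sub_distrib, ← Finset.mul_sum,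
    Finset.sum_const, Finset.card_univ, Fintype.card_fin, nsmul_eq_mul]
  ring

lemma E_triangle {n : ℕ} (k m : ℝ) (hkm : k * m = n) (T : ℝ)
    (hT : 6 * T = n * (n - m) * (n - 2 * m))
    (U : Finset (Fin n)) (F : (Fin n → Fin n) → ℝ) (hU : U.card + 3 ≤ n) (hF : PJ U F) :
    E k m (F * fun c => (∑ S ∈ univ.filter (fun S : Finset (Fin n) => S.card = 3),
        ∏ e ∈ univ.filter (fun e : KEdge n => (e : Finset (Fin n)) ⊆ S), pt e c) - T) = 0 := by
  have h1 : (F * fun c => (∑ S ∈ univ.filter (fun S : Finset (Fin n) => S.card = 3),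
        ∏ e ∈ univ.filter (fun e : KEdge n => (e : Finset (Fin n)) ⊆ S), pt e c) - T)
      = (1 / 6 : ℝ) • ∑ a, ((2 * m - 3 * n) • (F * DD m a)
        + ∑ i, (2 : ℝ) • ((fun c => F c * if c i = c a then (1 : ℝ) else 0) * DD m a)) := by
    funext c
    have h2 := sum_triangles c
    have h3 := triangle_pointwise m c
    simp only [Pi.mul_apply, Pi.smul_apply, Finset.sum_apply, Pi.add_apply, smul_eq_mul]
    have h4 : (∑ S ∈ univ.filter (fun S : Finset (Fin n) => S.card = 3),
        ∏ e ∈ univ.filter (fun e : KEdge n => (e : Finset (Fin n)) ⊆ S), pt e c) - T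
        = (1 / 6) * ∑ a, ((2 * m - 3 * n) * DD m a c
        + ∑ i, 2 * ((if c i = c a then (1 : ℝ) else 0) * DD m a c)) := by
      linarith
    rw [h4, mul_left_comm, Finset.mul_sum (a := F c)]
    congr 1
    apply Finset.sum_congr rfl
    intro a _
    rw [mul_add, Finset.mul_sum]
    congr 1
    · ring
    · apply Finset.sum_congr rfl
      intro i _
      ring
  rw [h1, map_smul, map_sum, Finset.sum_eq_zero, smul_zero]
  intro a _
  have hc1 := Finset.card_insert_le a U
  rw [map_add, map_smul, E_DD k m hkm U a (by omega) F hF.1, map_sum, Finset.sum_eq_zero]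
  · simp
  intro i _
  rw [map_smul, E_DD k m hkm (insert i (insert a U)) a, smul_zero]
  · rw [Finset.insert_eq_of_mem (by simp)]
    have := Finset.card_insert_le i (insert a U)
    omega
  · intro c c' h
    simp only
    rw [hF.1 c c' (fun j hj => h j (by simp [hj])), h i (by simp), h a (by simp)]

end TriSOS

theorem triangle_problem_sos_lower_bound (n : ℕ) (hn : 6 ≤ n) (k : ℝ)
    (hk1 : 1 ≤ k) (hkn : k ≤ n)
    (hnotint : (∀ z : ℤ, k ≠ z) ∨ (∀ z : ℤ, (n : ℝ) / k ≠ z))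
    (ρ T : ℝ)
    (hρ : ρ = 1 - ((n : ℝ) / k - 1) / ((n : ℝ) - 1))
    (hT : T = (n.choose 3 : ℝ) -
      ((n : ℝ) * ((n : ℝ) - 1) * (1 - ρ) / 6) * ((1 + 2 * ρ) * (n : ℝ) - 2 - 2 * ρ)) :
    ¬ ∃ (f : KEdge n → MvPolynomial (KEdge n) ℝ)
        (fdens ftri : MvPolynomial (KEdge n) ℝ)
        (m : ℕ) (g : Fin m → MvPolynomial (KEdge n) ℝ),
      (∀ e, indexDeg (f e) ≤ (2 * (⌊min k ((n : ℝ) / k)⌋).toNat + 2) - 2) ∧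
      indexDeg fdens ≤ (2 * (⌊min k ((n : ℝ) / k)⌋).toNat + 2) - 2 ∧
      indexDeg ftri ≤ (2 * (⌊min k ((n : ℝ) / k)⌋).toNat + 2) - 3 ∧
      (∀ t, 2 * indexDeg (g t) ≤ 2 * (⌊min k ((n : ℝ) / k)⌋).toNat + 2) ∧
      (-1 : MvPolynomial (KEdge n) ℝ) =
        (∑ e, f e * (X e ^ 2 - X e)) +
        fdens * ((∑ e, X e) - C (ρ * (n.choose 2 : ℝ))) +
        ftri * ((∑ S ∈ univ.filter (fun S : Finset (Fin n) => S.card = 3),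
            ∏ e ∈ univ.filter (fun e : KEdge n => (e : Finset (Fin n)) ⊆ S), X e) - C T) +
        ∑ t, (g t) ^ 2 := by
  rintro ⟨f, fdens, ftri, M, g, _, hfd, hft, hg, hid⟩
  have hk0 : (0 : ℝ) < k := by linarith
  have hn0 : (0 : ℝ) < n := by linarith
  have hn6 : (6 : ℝ) ≤ n := by exact_mod_cast hn
  have hkm : k * ((n : ℝ) / k) = n := by field_simp
  set m : ℝ := (n : ℝ) / k with hm
  have hm1 : 1 ≤ m := by rw [hm, le_div_iff₀ hk0]; linarith
  set p : ℕ := (⌊min k m⌋).toNat with hp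
  have hpfl : (p : ℝ) ≤ min k m := by
    have h0 : (0 : ℤ) ≤ ⌊min k m⌋ := Int.floor_nonneg.2 (le_min (by linarith) (by linarith))
    have h1 : ((p : ℤ) : ℝ) = (⌊min k m⌋ : ℝ) := by
      rw [hp, Int.toNat_of_nonneg h0]
    have h2 := Int.floor_le (min k m)
    rw [← h1] at h2
    exact_mod_cast h2
  have hpk : (p : ℝ) ≤ k := le_trans hpfl (min_le_left _ _)
  have hpm : (p : ℝ) ≤ m := le_trans hpfl (min_le_right _ _)
  have hpp : p * p ≤ n := by
    have : (p : ℝ) * p ≤ n := by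
      rw [← hkm]
      exact mul_le_mul hpk hpm (by positivity) hk0.le
    exact_mod_cast this
  have h2s : 2 * (p + 1) ≤ n := by
    by_cases h3 : p ≤ 2
    · omega
    · have : 3 * p ≤ p * p := Nat.mul_le_mul_right p (by omega)
      omega
  have hρ' : ρ * ((n : ℝ) - 1) = n - m := by
    rw [hρ]
    have : (n : ℝ) - 1 ≠ 0 := by linarith
    field_simp
    ring
  have hc2 : (n.choose 2 : ℝ) = n * (n - 1) / 2 := Nat.cast_choose_two ℝ n
  have hc3 : (n.choose 3 : ℝ) = n * (n - 1) * (n - 2) / 6 := by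
    have h1 : n.choose 3 * 6 = n * (n - 1) * (n - 2) := by
      have := Nat.descFactorial_eq_factorial_mul_choose n 3
      simp only [Nat.descFactorial, Nat.factorial] at this
      rw [show n * (n - 1) * (n - 2) = (n - 2) * ((n - 1) * ((n - 0) * 1)) by
        rw [Nat.sub_zero]; ring]
      rw [this]
      ring
    have h2 : (n.choose 3 : ℝ) * 6 = n * (n - 1) * (n - 2) := by
      have h3 : ((n.choose 3 * 6 : ℕ) : ℝ) = ((n * (n - 1) * (n - 2) : ℕ) : ℝ) := by rw [h1]
      push_cast [Nat.cast_sub (show 1 ≤ n by omega), Nat.cast_sub (show 2 ≤ n by omega)] at h3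
      exact h3
    linarith
  have hR : 2 * (ρ * (n.choose 2 : ℝ)) = n * (n - m) := by
    rw [hc2, ← hρ']; ring
  have hT6 : 6 * T = n * (n - m) * (n - 2 * m) := by
    have e1 : ((n : ℝ) - 1) * (1 - ρ) = m - 1 := by linarith
    have e2 : (1 + 2 * ρ) * (n : ℝ) - 2 - 2 * ρ = 3 * n - 2 - 2 * m := by linarith
    have e3 : (n : ℝ) * ((n : ℝ) - 1) * (1 - ρ) / 6 = n * (m - 1) / 6 := by
      rw [mul_assoc, e1]
    rw [hT, e2, e3, hc3]
    ring
  have key := congrArg (TriSOS.ev n) hid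
  simp only [map_add, map_neg, map_one, map_sum, map_mul, map_sub, map_pow] at key
  have hX : ∀ e : KEdge n, TriSOS.ev n (X e) = TriSOS.pt e := fun e => by
    simp [TriSOS.ev]
  have hC : ∀ r : ℝ, TriSOS.ev n (C r) = fun _ => r := fun r => by
    funext c
    simp [TriSOS.ev]
  have z1 : ∀ e, TriSOS.E k m (TriSOS.ev n (f e) *
      (TriSOS.ev n (X e) ^ 2 - TriSOS.ev n (X e))) = 0 := by
    intro e
    have : TriSOS.ev n (X e) ^ 2 - TriSOS.ev n (X e) = 0 := by
      rw [hX]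
      funext c
      simp [TriSOS.pt]
    rw [this, mul_zero, map_zero]
  have z2 := TriSOS.E_mul_zero k m fdens hfd
    (fun c => (∑ e : KEdge n, TriSOS.pt e c) - ρ * (n.choose 2 : ℝ))
    (fun U F hU hF => TriSOS.E_density k m hkm _ hR U F (by omega) hF)
  have z3 := TriSOS.E_mul_zero k m ftri hft
    (fun c => (∑ S ∈ univ.filter (fun S : Finset (Fin n) => S.card = 3),
        ∏ e ∈ univ.filter (fun e : KEdge n => (e : Finset (Fin n)) ⊆ S), TriSOS.pt e c) - T)
    (fun U F hU hF => TriSOS.E_triangle k m hkm T hT6 U F (by omega) hF)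
  have z4 : ∀ t, 0 ≤ TriSOS.E k m (TriSOS.ev n (g t) ^ 2) := by
    intro t
    have hgt := hg t
    obtain ⟨v, hv⟩ := TriSOS.ev_span (s := p + 1) (by omega) (g t) (by omega)
    rw [hv, pow_two]
    apply TriSOS.psd k m hkm (p + 1) h2s
    · push_cast; linarith
    · push_cast; linarith
  have g2 : (∑ e : KEdge n, TriSOS.ev n (X e)) - TriSOS.ev n (C (ρ * (n.choose 2 : ℝ)))
      = fun c => (∑ e : KEdge n, TriSOS.pt e c) - ρ * (n.choose 2 : ℝ) := by
    funext c
    simp only [hX, hC, Pi.sub_apply, Finset.sum_apply]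
  have g3 : (∑ S ∈ univ.filter (fun S : Finset (Fin n) => S.card = 3),
        TriSOS.ev n (∏ e ∈ univ.filter (fun e : KEdge n => (e : Finset (Fin n)) ⊆ S), X e))
        - TriSOS.ev n (C T)
      = fun c => (∑ S ∈ univ.filter (fun S : Finset (Fin n) => S.card = 3),
        ∏ e ∈ univ.filter (fun e : KEdge n => (e : Finset (Fin n)) ⊆ S), TriSOS.pt e c) - T := by
    funext c
    simp only [map_prod, hX, hC, Pi.sub_apply, Finset.sum_apply, Finset.prod_apply]
  rw [← map_mul (TriSOS.ev n) (C ρ), ← C_mul, g2, g3] at key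
  have final := congrArg (TriSOS.E k m) key
  rw [map_neg, TriSOS.E_one (by omega) k m hkm, map_add, map_add, map_add, z2, z3, map_sum,
    map_sum, Finset.sum_eq_zero (fun e _ => z1 e)] at final
  have := Finset.sum_nonneg (fun t (_ : t ∈ (univ : Finset (Fin M))) => z4 t)
  linarith
end

section
/- Let n be an odd positive integer, and define a linear map Ẽ on the multilinear polynomials in the variables x_e indexed by the edges e of the complete graph Kₙ (unordered pairs of distinct elements of {1, …, n}) by: Ẽ[Π_{e∈E} x_e] = Π_{j=1}^{|E|} 1/(n − 2j + 1) if the edge set E is a partial matching (pairwise disjoint edges), and Ẽ[Π_{e∈E} x_e] = 0 otherwise (with Ẽ[1] = 1). Then for every polynomial g in these variables with 2·indexdeg(g) ≤ n, one has Ẽ[red(g²)] ≥ 0, where red denotes the multilinear reduction replacing each x_eᵗ (t ≥ 1) by x_e. -/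
open MvPolynomial Finset

/-- The multilinear reduction: replace each `x_e ^ t` (`t ≥ 1`) by `x_e` in every
monomial. -/
noncomputable def red {n : ℕ} (p : MvPolynomial (KEdge n) ℝ) : MvPolynomial (KEdge n) ℝ :=
  ∑ d ∈ p.support,
    monomial (∑ e ∈ d.support, Finsupp.single e 1) (p.coeff d)

/-- The MOD 2 principle pseudo-expectation: the linear map on multilinear polynomials
determined by `Ẽ[∏_{e∈E} x_e] = ∏_{j=1}^{|E|} 1/(n − 2j + 1)` when `E` is a partial
matching, and `0` otherwise. -/
noncomputable def Emod (n : ℕ) (p : MvPolynomial (KEdge n) ℝ) : ℝ :=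
  ∑ d ∈ p.support, p.coeff d *
    (if ∀ e ∈ d.support, ∀ e' ∈ d.support, e ≠ e' →
        Disjoint (e : Finset (Fin n)) (e' : Finset (Fin n))
     then ∏ j ∈ Finset.range d.support.card, (1 / ((n : ℝ) - 2 * j - 1))
     else 0)

namespace Mod2

/-- Sets of (arbitrary) vertex subsets. -/
abbrev G (n : ℕ) := Finset (Finset (Fin n))

/-- Vertices covered. -/
def V {n : ℕ} (S : G n) : Finset (Fin n) := S.biUnion id

def IsM {n : ℕ} (S : G n) : Prop :=
  (∀ e ∈ S, e.card = 2) ∧ ∀ e ∈ S, ∀ e' ∈ S, e ≠ e' → Disjoint e e'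

open Classical in
noncomputable def F {n : ℕ} (S : G n) : ℝ :=
  if IsM S then ∏ j ∈ Finset.range S.card, (1 / ((n : ℝ) - 2 * j - 1)) else 0

def act {n : ℕ} (σ : Equiv.Perm (Fin n)) (S : G n) : G n := S.image (fun e => e.image σ)

variable {n : ℕ}

lemma mem_V {S : G n} {a : Fin n} : a ∈ V S ↔ ∃ e ∈ S, a ∈ e := by simp [V]

lemma V_union (S T : G n) : V (S ∪ T) = V S ∪ V T := by
  ext a; simp only [mem_V, mem_union]; grind

lemma V_insert (e : Finset (Fin n)) (S : G n) : V (insert e S) = e ∪ V S := by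
  ext a; simp only [mem_V, mem_union, mem_insert]; grind

lemma IsM.mono {S T : G n} (h : IsM T) (hs : S ⊆ T) : IsM S :=
  ⟨fun e he => h.1 e (hs he), fun e he e' he' => h.2 e (hs he) e' (hs he')⟩

lemma F_zero {S : G n} (h : ¬ IsM S) : F S = 0 := if_neg h

lemma F_zero_of_subset {S T : G n} (h : ¬ IsM S) (hs : S ⊆ T) : F T = 0 :=
  F_zero fun hT => h (hT.mono hs)

lemma IsM.card_V {S : G n} (h : IsM S) : (V S).card = 2 * S.card := by
  unfold V
  rw [card_biUnion]
  · simp only [id]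
    rw [sum_congr rfl h.1]; simp [mul_comm]
  · intro x hx y hy hxy
    exact h.2 x hx y hy hxy

lemma F_nonneg (S : G n) : 0 ≤ F S := by
  unfold F
  split_ifs with h
  · apply prod_nonneg
    intro j hj
    have h1 := h.card_V
    have h2 : (V S).card ≤ n := by simpa using card_le_univ (V S)
    have h3 : 2 * j + 2 ≤ n := by have := mem_range.1 hj; omega
    have h4 : (2 * j + 2 : ℝ) ≤ n := by exact_mod_cast h3
    apply one_div_nonneg.2
    linarith
  · exact le_rfl

lemma notM_insert {S : G n} {a : Fin n} {e : Finset (Fin n)} (ha : a ∈ V S) (hae : a ∈ e)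
    (h : e ∉ S) : ¬ IsM (insert e S) := by
  intro hM
  obtain ⟨e', he', hae'⟩ := mem_V.1 ha
  have := hM.2 e (mem_insert_self _ _) e' (mem_insert_of_mem he') (by rintro rfl; exact h he')
  exact (disjoint_left.1 this hae) hae'

lemma isM_insert {S : G n} {e : Finset (Fin n)} (hS : IsM S) (hc : e.card = 2)
    (h : Disjoint e (V S)) : IsM (insert e S) := by
  have key : ∀ e' ∈ S, Disjoint e e' := fun e' he' =>
    disjoint_left.2 fun x hx hx' => disjoint_left.1 h hx (mem_V.2 ⟨e', he', hx'⟩)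
  refine ⟨?_, ?_⟩
  · intro e' he'
    rcases mem_insert.1 he' with rfl | he'
    · exact hc
    · exact hS.1 _ he'
  · intro e1 h1 e2 h2 hne
    rcases mem_insert.1 h1 with h1a | h1a <;> rcases mem_insert.1 h2 with h2a | h2a
    · exact absurd (h1a.trans h2a.symm) hne
    · rw [h1a]; exact key _ h2a
    · rw [h2a]; exact (key _ h1a).symm
    · exact hS.2 _ h1a _ h2a hne

lemma rel (S : G n) (a : Fin n) (h : a ∉ V S → (V S).card + 1 < n) :
    F S = ∑ b ∈ univ.erase a, F (insert {a, b} S) := by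
  by_cases hS : IsM S
  swap
  · rw [F_zero hS, sum_eq_zero]
    intro b _
    exact F_zero_of_subset hS (subset_insert _ _)
  by_cases ha : a ∈ V S
  · obtain ⟨e, he, hae⟩ := mem_V.1 ha
    obtain ⟨c, hca, hec⟩ : ∃ c, c ≠ a ∧ e = {a, c} := by
      obtain ⟨x, y, hxy, rfl⟩ := card_eq_two.1 (hS.1 e he)
      rcases mem_insert.1 hae with rfl | h2
      · exact ⟨y, hxy.symm, rfl⟩
      · rw [mem_singleton] at h2; subst h2
        exact ⟨x, hxy, pair_comm _ _⟩
    subst hec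
    rw [sum_eq_single c]
    · rw [insert_eq_of_mem he]
    · intro b hb hbc
      apply F_zero
      by_cases hm : ({a, b} : Finset (Fin n)) ∈ S
      · exfalso
        have hne : ({a, b} : Finset (Fin n)) ≠ {a, c} := by
          intro heq
          have : b ∈ ({a, c} : Finset (Fin n)) := by rw [← heq]; simp
          simp at this hb
          tauto
        exact disjoint_left.1 (hS.2 _ hm _ he hne) (mem_insert_self _ _) (mem_insert_self _ _)
      · exact notM_insert ha (by simp) hm
    · intro hc; simp [hca] at hc
  · have hlt := h ha
    have hcard := hS.card_V
    have hsub : (V S)ᶜ.erase a ⊆ univ.erase a := erase_subset_erase _ (subset_univ _)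
    rw [← sum_subset hsub]
    · have hval : ∀ b ∈ (V S)ᶜ.erase a,
          F (insert {a, b} S) = F S * (1 / ((n : ℝ) - 2 * S.card - 1)) := by
        intro b hb
        simp only [mem_erase, mem_compl] at hb
        have hM : IsM (insert {a, b} S) := by
          refine isM_insert hS (card_pair hb.1.symm) ?_
          rw [disjoint_left]
          intro x hx
          simp only [mem_insert, mem_singleton] at hx
          rcases hx with rfl | rfl
          · exact ha
          · exact hb.2
        have hnot : ({a, b} : Finset (Fin n)) ∉ S := fun hm => ha (mem_V.2 ⟨_, hm, by simp⟩)
        unfold F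
        rw [if_pos hM, if_pos hS, card_insert_of_notMem hnot, prod_range_succ]
      rw [sum_congr rfl hval, sum_const, card_erase_of_mem (by simpa using ha), card_compl,
        Fintype.card_fin, nsmul_eq_mul, hcard]
      have hc : ((n - 2 * S.card - 1 : ℕ) : ℝ) = (n : ℝ) - 2 * S.card - 1 := by
        rw [Nat.sub_sub, Nat.cast_sub (by omega)]; push_cast; ring
      rw [hc]
      have hpos : (0 : ℝ) < (n : ℝ) - 2 * S.card - 1 := by
        rw [← hc]; exact_mod_cast (by omega)
      field_simp
    · intro b hb hb'
      have hbV : b ∈ V S := by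
        by_contra hcon
        apply hb'
        simp only [mem_erase, mem_compl] at hb ⊢
        exact ⟨hb.1, hcon⟩
      apply F_zero
      exact notM_insert hbV (by simp) (fun hm => ha (mem_V.2 ⟨_, hm, by simp⟩))

lemma posJ (J : Finset (Fin n)) (q : G n → ℝ) (hq : ∀ R, q R ≠ 0 → V R ⊆ J) :
    ∀ (k : ℕ) (C : G n), (J \ V C).card = k → (V C).card + 2 * (J \ V C).card < n →
      0 ≤ ∑ R, ∑ R', q R * q R' * F (R ∪ R' ∪ C) := by
  intro k
  induction k using Nat.strong_induction_on with
  | _ k ih =>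
  intro C hk hlt
  by_cases hsub : J ⊆ V C
  · have key : ∀ R R', q R * q R' * F (R ∪ R' ∪ C) =
        (if R ⊆ C then q R else 0) * (if R' ⊆ C then q R' else 0) * F C := by
      intro R R'
      by_cases hR : q R = 0
      · simp [hR]
      by_cases hR' : q R' = 0
      · simp [hR']
      have aux : ∀ R, q R ≠ 0 → ¬ R ⊆ C → ¬ IsM (R ∪ C) := by
        intro R hR hRC hM
        obtain ⟨e, he, heC⟩ := not_subset.1 hRC
        have h2 := hM.1 e (mem_union_left _ he)
        obtain ⟨a, ha⟩ := card_pos.1 (by omega : 0 < e.card)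
        have haC : a ∈ V C := hsub (hq R hR (mem_V.2 ⟨e, he, ha⟩))
        refine notM_insert haC ha heC (hM.mono ?_)
        exact insert_subset (mem_union_left _ he) subset_union_right
      by_cases h1 : R ⊆ C
      · by_cases h2 : R' ⊆ C
        · rw [if_pos h1, if_pos h2, union_eq_right.2 (union_subset h1 h2)]
        · rw [F_zero_of_subset (aux R' hR' h2) (by grind), if_neg h2]; ring
      · rw [F_zero_of_subset (aux R hR h1) (by grind), if_neg h1]; ring
    simp_rw [key, ← sum_mul]
    rw [← sum_mul_sum]
    exact mul_nonneg (mul_self_nonneg _) (F_nonneg _)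
  · obtain ⟨a, haJ, haC⟩ := not_subset.1 hsub
    have hapos : 0 < (J \ V C).card := card_pos.2 ⟨a, mem_sdiff.2 ⟨haJ, haC⟩⟩
    have key : ∀ R R', q R * q R' * F (R ∪ R' ∪ C) =
        ∑ b ∈ univ.erase a, q R * q R' * F (R ∪ R' ∪ insert {a, b} C) := by
      intro R R'
      by_cases hR : q R = 0
      · simp [hR]
      by_cases hR' : q R' = 0
      · simp [hR']
      rw [← mul_sum]
      congr 1
      rw [rel _ a]
      · apply sum_congr rfl
        intro b _
        rw [union_insert]
      · intro hna
        have h1 : V (R ∪ R' ∪ C) ⊆ ((J \ V C) ∪ V C).erase a := by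
          intro x hx
          refine mem_erase.2 ⟨by rintro rfl; exact hna hx, ?_⟩
          rw [V_union, V_union] at hx
          have := hq R hR
          have := hq R' hR'
          grind
        have h2 := card_le_card h1
        rw [card_erase_of_mem (by simp [haJ])] at h2
        have h3 := card_union_le (J \ V C) (V C)
        omega
    simp_rw [key]
    have : ∑ R, ∑ R', ∑ b ∈ univ.erase a, q R * q R' * F (R ∪ R' ∪ insert {a, b} C) =
        ∑ b ∈ univ.erase a, ∑ R, ∑ R', q R * q R' * F (R ∪ R' ∪ insert {a, b} C) := by
      have e2 : ∀ R, ∑ R', ∑ b ∈ univ.erase a, q R * q R' * F (R ∪ R' ∪ insert {a, b} C) =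
        ∑ b ∈ univ.erase a, ∑ R', q R * q R' * F (R ∪ R' ∪ insert {a, b} C) := fun R => sum_comm
      rw [sum_congr rfl fun R _ => e2 R, sum_comm]
    rw [this]
    apply sum_nonneg
    intro b hb
    by_cases hbC : b ∈ V C
    · apply le_of_eq
      symm
      apply sum_eq_zero; intro R _
      apply sum_eq_zero; intro R' _
      rw [F_zero_of_subset (S := insert {a, b} C), mul_zero]
      · exact notM_insert hbC (by simp) (fun hm => haC (mem_V.2 ⟨_, hm, by simp⟩))
      · exact subset_union_right
    · have hss : J \ V (insert {a, b} C) ⊆ (J \ V C).erase a := by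
        intro x hx
        rw [V_insert] at hx
        simp only [mem_sdiff, mem_union, mem_insert, mem_singleton, mem_erase] at hx ⊢
        tauto
      have h1 := card_le_card hss
      rw [card_erase_of_mem (mem_sdiff.2 ⟨haJ, haC⟩)] at h1
      have h2 : (V (insert {a, b} C)).card ≤ 2 + (V C).card := by
        rw [V_insert]
        exact (card_union_le _ _).trans (by gcongr; exact card_le_two)
      exact ih _ (by omega) _ rfl (by omega)

lemma act_insert (σ : Equiv.Perm (Fin n)) (e : Finset (Fin n)) (S : G n) :
    act σ (insert e S) = insert (e.image σ) (act σ S) := by simp [act]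

lemma act_union (σ : Equiv.Perm (Fin n)) (S T : G n) : act σ (S ∪ T) = act σ S ∪ act σ T := by
  simp [act, image_union]

lemma act_mul (σ τ : Equiv.Perm (Fin n)) (S : G n) : act (σ * τ) S = act σ (act τ S) := by
  simp [act, image_image, Function.comp_def]

lemma act_one (S : G n) : act 1 S = S := by
  simp [act]

lemma act_fix (σ : Equiv.Perm (Fin n)) (S : G n) (h : ∀ a ∈ V S, σ a = a) : act σ S = S := by
  have : ∀ e ∈ S, e.image σ = e := by
    intro e he
    calc e.image σ = e.image id := image_congr (fun a ha => h a (mem_V.2 ⟨e, he, ha⟩))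
      _ = e := image_id
  unfold act
  calc S.image (fun e => e.image σ) = S.image id := image_congr (fun e he => this e he)
    _ = S := image_id

lemma V_act (σ : Equiv.Perm (Fin n)) (S : G n) : V (act σ S) = (V S).image σ := by
  ext a; simp only [mem_V, act, mem_image]; grind

lemma card_V_act (σ : Equiv.Perm (Fin n)) (S : G n) : (V (act σ S)).card = (V S).card := by
  rw [V_act, card_image_of_injective _ σ.injective]

lemma act_isM (σ : Equiv.Perm (Fin n)) {S : G n} (h : IsM S) : IsM (act σ S) := by
  refine ⟨?_, ?_⟩
  · intro e he
    obtain ⟨e0, h0, rfl⟩ := mem_image.1 he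
    simpa [card_image_of_injective _ σ.injective] using h.1 e0 h0
  · intro e he e' he' hne
    obtain ⟨e0, h0, rfl⟩ := mem_image.1 he
    obtain ⟨e1, h1, rfl⟩ := mem_image.1 he'
    exact (disjoint_image σ.injective).2 (h.2 e0 h0 e1 h1 (by rintro rfl; exact hne rfl))

lemma act_isM_iff (σ : Equiv.Perm (Fin n)) {S : G n} : IsM (act σ S) ↔ IsM S := by
  refine ⟨fun h => ?_, act_isM σ⟩
  have := act_isM σ⁻¹ h
  rwa [← act_mul, inv_mul_cancel, act_one] at this

lemma card_act (σ : Equiv.Perm (Fin n)) (S : G n) : (act σ S).card = S.card :=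
  card_image_of_injective _ (image_injective σ.injective)

lemma F_act (σ : Equiv.Perm (Fin n)) (S : G n) : F (act σ S) = F S := by
  unfold F
  rw [card_act]
  by_cases h : IsM S
  · rw [if_pos h, if_pos (act_isM σ h)]
  · rw [if_neg h, if_neg (mt (act_isM_iff σ).1 h)]

/-- pointwise stabilizer -/
def K (J : Finset (Fin n)) : Finset (Equiv.Perm (Fin n)) := univ.filter fun σ => ∀ j ∈ J, σ j = j

/-- averaged row -/
noncomputable def X (J : Finset (Fin n)) (d : ℕ) (S : G n) : G n → ℝ :=
  fun Y => if (V Y).card ≤ d then ∑ σ ∈ K J, F (act σ S ∪ Y) else 0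

noncomputable def Row (d : ℕ) (S : G n) : G n → ℝ :=
  fun Y => if (V Y).card ≤ d then F (S ∪ Y) else 0

noncomputable def W (J : Finset (Fin n)) (d : ℕ) : Submodule ℝ (G n → ℝ) :=
  Submodule.span ℝ (Row d '' (((univ : Finset (G n)).filter fun R => V R ⊆ J) : Finset (G n)))

lemma X_mem (J : Finset (Fin n)) (d : ℕ) (hd : 2 * d < n) : ∀ (k : ℕ) (S : G n),
    (V S \ J).card = k → (V S).card ≤ d → X J d S ∈ W J d := by
  intro k
  induction k using Nat.strong_induction_on with
  | _ k ih =>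
  intro S hk hS
  by_cases hsub : V S ⊆ J
  · have : X J d S = ((K J).card : ℝ) • Row d S := by
      ext Y
      simp only [X, Row, Pi.smul_apply, smul_eq_mul]
      split_ifs
      · rw [sum_congr rfl (g := fun _ => F (S ∪ Y))]
        · simp
        · intro σ hσ
          rw [act_fix]
          intro a ha
          exact (mem_filter.1 hσ).2 a (hsub ha)
      · simp
    rw [this]
    apply Submodule.smul_mem
    apply Submodule.subset_span
    exact ⟨S, by simpa using hsub, rfl⟩
  have Xzero : ∀ S : G n, ¬ IsM S → X J d S = 0 := by
    intro S hM
    ext Y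
    simp only [X, Pi.zero_apply]
    split_ifs
    · apply sum_eq_zero
      intro σ _
      exact F_zero_of_subset (mt (act_isM_iff σ).1 hM) subset_union_left
    · rfl
  by_cases hM : IsM S
  swap
  · rw [Xzero S hM]; exact Submodule.zero_mem _
  obtain ⟨b, hbV, hbJ⟩ := not_subset.1 hsub
  obtain ⟨e, he, hbe⟩ := mem_V.1 hbV
  obtain ⟨a, hab, hea⟩ : ∃ a, a ≠ b ∧ e = {a, b} := by
    obtain ⟨x, y, hxy, rfl⟩ := card_eq_two.1 (hM.1 e he)
    rcases mem_insert.1 hbe with rfl | h2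
    · exact ⟨y, hxy.symm, pair_comm _ _⟩
    · rw [mem_singleton] at h2; subst h2
      exact ⟨x, hxy, rfl⟩
  subst hea
  obtain ⟨S0, hS0, rfl⟩ : ∃ S0, {a, b} ∉ S0 ∧ S = insert {a, b} S0 :=
    ⟨S.erase {a, b}, notMem_erase _ _, (insert_erase he).symm⟩
  have ha0 : a ∉ V S0 := fun h => notM_insert h (by simp) hS0 hM
  have hb0 : b ∉ V S0 := fun h => notM_insert h (by simp) hS0 hM
  have hVS : V (insert {a, b} S0) = insert a (insert b (V S0)) := by
    rw [V_insert]; ext x; simp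
  have hcard : (V (insert {a, b} S0)).card = (V S0).card + 2 := by
    rw [hVS, card_insert_of_notMem (by simp [hab, ha0]), card_insert_of_notMem hb0]
  -- the main relation
  have hrel : X J d S0 = ∑ b' ∈ univ.erase a, X J d (insert {a, b'} S0) := by
    ext Y
    rw [Finset.sum_apply]
    simp only [X]
    split_ifs with hY
    · rw [sum_comm]
      apply sum_congr rfl
      intro σ _
      rw [rel _ (σ a)]
      · symm
        apply sum_bij (fun b _ => σ b)
        · intro b hb; simpa using hb
        · intro b _ b' _ h; exact σ.injective h
        · intro c hc
          refine ⟨σ⁻¹ c, ?_, by simp⟩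
          simp only [mem_erase, mem_univ, and_true] at hc ⊢
          rintro rfl; simp at hc
        · intro b hb
          rw [act_insert, insert_union]
          simp [image_insert]
      · intro _
        rw [V_union]
        have := card_union_le (V (act σ S0)) (V Y)
        rw [card_V_act] at this
        omega
    · simp
  -- symmetry
  have hsym : ∀ b', b' ∉ J → b' ≠ a → b' ∉ V S0 →
      X J d (insert {a, b'} S0) = X J d (insert {a, b} S0) := by
    intro b' hb'J hb'a hb'0
    ext Y
    simp only [X]
    split_ifs with hY
    · symm
      apply sum_bij (fun σ _ => σ * Equiv.swap b b')
      · intro σ hσ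
        simp only [K, mem_filter, mem_univ, true_and] at hσ ⊢
        intro j hj
        rw [Equiv.Perm.mul_apply, Equiv.swap_apply_of_ne_of_ne, hσ j hj]
        · rintro rfl; exact hbJ hj
        · rintro rfl; exact hb'J hj
      · intro σ _ τ _ h; exact mul_right_cancel h
      · intro σ hσ
        refine ⟨σ * Equiv.swap b b', ?_, by simp [mul_assoc]⟩
        simp only [K, mem_filter, mem_univ, true_and] at hσ ⊢
        intro j hj
        rw [Equiv.Perm.mul_apply, Equiv.swap_apply_of_ne_of_ne, hσ j hj]
        · rintro rfl; exact hbJ hj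
        · rintro rfl; exact hb'J hj
      · intro σ _
        rw [act_mul, act_insert (Equiv.swap b b'), act_fix (Equiv.swap b b') S0]
        · rw [image_insert, image_singleton, Equiv.swap_apply_right,
            Equiv.swap_apply_of_ne_of_ne hab hb'a.symm]
        · intro x hx
          apply Equiv.swap_apply_of_ne_of_ne
          · rintro rfl; exact hb0 hx
          · rintro rfl; exact hb'0 hx
    · rfl
  set B := (univ.erase a).filter (fun b' => b' ∉ J ∧ b' ∉ V S0) with hB
  have hbB : b ∈ B := by simp [hB, hab.symm, hbJ, hb0]
  have hsplit : X J d S0 = (B.card : ℝ) • X J d (insert {a, b} S0) +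
      ∑ b' ∈ (univ.erase a).filter (fun b' => b' ∈ J), X J d (insert {a, b'} S0) := by
    rw [hrel, ← sum_filter_add_sum_filter_not (univ.erase a) (fun b' => b' ∈ J), add_comm]
    congr 1
    rw [← sum_subset (s₁ := B)]
    · rw [sum_congr rfl (g := fun _ => X J d (insert {a, b} S0))]
      · rw [sum_const, Nat.cast_smul_eq_nsmul]
      · intro b' hb'
        simp only [hB, mem_filter, mem_erase] at hb'
        exact hsym b' hb'.2.1 hb'.1.1 hb'.2.2
    · intro x hx
      simp only [hB, mem_filter, mem_erase] at hx ⊢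
      tauto
    · intro x hx hx'
      have hxV : x ∈ V S0 := by
        simp only [hB, mem_filter, mem_erase] at hx hx'
        tauto
      apply Xzero
      exact notM_insert hxV (by simp) (fun hm => ha0 (mem_V.2 ⟨_, hm, by simp⟩))
  have hBpos : (B.card : ℝ) ≠ 0 := by
    have := card_pos.2 ⟨b, hbB⟩
    positivity
  have hfin : X J d (insert {a, b} S0) = (B.card : ℝ)⁻¹ • (X J d S0 -
      ∑ b' ∈ (univ.erase a).filter (fun b' => b' ∈ J), X J d (insert {a, b'} S0)) := by
    rw [hsplit, add_sub_cancel_right, smul_smul, inv_mul_cancel₀ hBpos, one_smul]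
  rw [hfin]
  have hbmem : b ∈ V (insert {a, b} S0) \ J := mem_sdiff.2 ⟨hbV, hbJ⟩
  apply Submodule.smul_mem
  apply Submodule.sub_mem
  · refine ih _ ?_ S0 rfl (by omega)
    rw [← hk]
    apply card_lt_card
    refine (ssubset_iff_of_subset ?_).2 ⟨b, hbmem, by simp [hb0]⟩
    rw [hVS]; intro x; simp; tauto
  · apply Submodule.sum_mem
    intro b' hb'
    simp only [mem_filter, mem_erase] at hb'
    have hbb' : b ≠ b' := by rintro rfl; exact hbJ hb'.2
    refine ih _ ?_ _ rfl ?_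
    · rw [← hk]
      apply card_lt_card
      refine (ssubset_iff_of_subset ?_).2 ⟨b, hbmem, ?_⟩
      · rw [hVS, V_insert]; intro x; simp only [mem_sdiff, mem_union, mem_insert, mem_singleton]
        rintro ⟨(rfl | rfl) | h, h2⟩
        · tauto
        · exact absurd hb'.2 h2
        · tauto
      · rw [V_insert]; simp [hb0, hbb', hab.symm]
    · have : (V (insert {a, b'} S0)).card ≤ 2 + (V S0).card := by
        rw [V_insert]
        exact (card_union_le _ _).trans (by gcongr; exact card_le_two)
      omega

/-- masked moment matrix -/
noncomputable def A (n d : ℕ) : Matrix (G n) (G n) ℝ := fun S T =>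
  if (V S).card ≤ d ∧ (V T).card ≤ d then F (S ∪ T) else 0

lemma inv_pos (J : Finset (Fin n)) (d : ℕ) (hd : 2 * d < n) (hJ : J.card ≤ d)
    (h : G n → ℝ) (hsupp : ∀ S, h S ≠ 0 → (V S).card ≤ d)
    (hinv : ∀ σ ∈ K J, ∀ S, h (act σ S) = h S) :
    0 ≤ ∑ S, ∑ T, h S * h T * F (S ∪ T) := by
  have hbij : ∀ (σ : Equiv.Perm (Fin n)) (f : G n → ℝ), ∑ S, f (act σ S) = ∑ S, f S := by
    intro σ f
    apply Fintype.sum_bijective (act σ)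
    · exact (Finite.injective_iff_bijective).1 (image_injective (image_injective σ.injective))
    · intro _; rfl
  -- the row functional
  have hKpos : ((K J).card : ℝ) ≠ 0 := by
    have : 0 < (K J).card := card_pos.2 ⟨1, by simp [K]⟩
    positivity
  have hmem : (∑ S, h S • Row d S) ∈ W J d := by
    have e1 : ∑ S, h S • Row d S = ((K J).card : ℝ)⁻¹ • ∑ S, h S • X J d S := by
      rw [eq_inv_smul_iff₀ hKpos]
      ext Y
      simp only [Pi.smul_apply, Finset.sum_apply, smul_eq_mul, Row, X]
      split_ifs
      · simp_rw [mul_sum (K J)]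
        rw [sum_comm]
        rw [← nsmul_eq_mul, ← sum_const]
        apply sum_congr rfl
        intro σ hσ
        rw [← hbij σ]
        apply sum_congr rfl
        intro S _
        rw [hinv σ hσ]
      · simp
    rw [e1]
    apply Submodule.smul_mem
    apply Submodule.sum_mem
    intro S _
    by_cases h0 : h S = 0
    · simp [h0]
    · exact Submodule.smul_mem _ _ (X_mem J d hd _ S rfl (hsupp S h0))
  obtain ⟨q0, hq0⟩ := (Submodule.mem_span_image_finset_iff_exists_fun ℝ).1 hmem
  set q : G n → ℝ := fun R => if hR : R ∈ (univ : Finset (G n)).filter (fun R => V R ⊆ J) then q0 ⟨R, hR⟩ else 0 with hq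
  have hqs : ∀ R, q R ≠ 0 → V R ⊆ J := by
    intro R hR
    by_contra hcon
    exact hR (dif_neg (by simpa using hcon))
  have hrow : ∀ Y : G n, (V Y).card ≤ d → ∑ S, h S * F (S ∪ Y) = ∑ R, q R * F (R ∪ Y) := by
    intro Y hY
    have := congrFun hq0 Y
    simp only [Pi.smul_apply, Finset.sum_apply, smul_eq_mul, Row, if_pos hY] at this
    rw [← this, ← sum_subset (subset_univ ((univ : Finset (G n)).filter (fun R => V R ⊆ J)))]
    · rw [← sum_coe_sort _ (fun x => q x * F (x ∪ Y))]
      apply sum_congr rfl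
      intro R _
      simp only [hq]
      rw [dif_pos R.2]
    · intro R _ hR
      simp only [hq]
      rw [dif_neg hR, zero_mul]
  have hpos := posJ J q hqs _ ∅ rfl (by simp [V]; omega)
  convert hpos using 1
  calc ∑ S, ∑ T, h S * h T * F (S ∪ T) = ∑ T, h T * ∑ S, h S * F (S ∪ T) := by
        rw [sum_comm]
        apply sum_congr rfl; intro T _
        rw [mul_sum]
        apply sum_congr rfl; intro S _
        ring
    _ = ∑ T, h T * ∑ R, q R * F (R ∪ T) := by
        apply sum_congr rfl; intro T _
        by_cases h0 : h T = 0
        · simp [h0]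
        · rw [hrow T (hsupp T h0)]
    _ = ∑ R, q R * ∑ T, h T * F (T ∪ R) := by
        simp_rw [mul_sum]
        rw [sum_comm]
        apply sum_congr rfl; intro R _
        apply sum_congr rfl; intro T _
        rw [union_comm]; ring
    _ = ∑ R, q R * ∑ R', q R' * F (R' ∪ R) := by
        apply sum_congr rfl; intro R _
        by_cases h0 : q R = 0
        · simp [h0]
        · rw [hrow R ((card_le_card (hqs R h0)).trans hJ)]
    _ = _ := by
        apply sum_congr rfl; intro R _
        rw [mul_sum]
        apply sum_congr rfl; intro T _
        rw [union_empty, union_comm]; ring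

lemma A_herm (n d : ℕ) : (A n d).IsHermitian := by
  ext S T
  simp [A, Matrix.conjTranspose_apply, union_comm, and_comm]

lemma A_act (d : ℕ) (σ : Equiv.Perm (Fin n)) (S T : G n) :
    A n d (act σ S) (act σ T) = A n d S T := by
  simp only [A, card_V_act, ← act_union, F_act]

lemma A_psd (n d : ℕ) (hd : 2 * d < n) : (A n d).PosSemidef := by
  rw [(A_herm n d).posSemidef_iff_eigenvalues_nonneg]
  intro i
  by_contra hneg
  simp only [Pi.zero_apply, not_le] at hneg
  set μ := (A_herm n d).eigenvalues i
  set f : G n → ℝ := ⇑((A_herm n d).eigenvectorBasis i) with hf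
  have hev : (A n d).mulVec f = μ • f := (A_herm n d).mulVec_eigenvectorBasis i
  have hevS : ∀ S, ∑ T, A n d S T * f T = μ * f S := by
    intro S
    have := congrFun hev S
    simpa [Matrix.mulVec, dotProduct] using this
  have hfne : ∃ S, f S ≠ 0 := by
    by_contra hcon
    push Not at hcon
    have h0 : (A_herm n d).eigenvectorBasis i = 0 := by
      ext S; exact hcon S
    have := (A_herm n d).eigenvectorBasis.orthonormal.ne_zero i
    exact this h0
  obtain ⟨S, hS⟩ := hfne
  have hsupp : ∀ T (f : G n → ℝ), (∑ T', A n d T T' * f T' = μ * f T) → f T ≠ 0 →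
      (V T).card ≤ d := by
    intro T f h1 hT
    by_contra hcon
    rw [sum_eq_zero] at h1
    · rcases mul_eq_zero.1 h1.symm with h | h
      · exact hneg.ne h
      · exact hT h
    · intro T' _
      simp [A, hcon]
  set J := V S with hJ
  set h : G n → ℝ := fun T => ∑ σ ∈ K J, f (act σ T) with hh
  have hbij : ∀ (σ : Equiv.Perm (Fin n)) (f : G n → ℝ), ∑ S, f (act σ S) = ∑ S, f S := by
    intro σ f
    apply Fintype.sum_bijective (act σ)
    · exact (Finite.injective_iff_bijective).1 (image_injective (image_injective σ.injective))
    · intro _; rfl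
  have hhev : ∀ T, ∑ T', A n d T T' * h T' = μ * h T := by
    intro T
    simp only [hh, mul_sum]
    rw [sum_comm]
    apply sum_congr rfl
    intro σ _
    rw [← hevS, ← hbij σ (fun T' => A n d (act σ T) T' * f T')]
    simp only [A_act]
  have hhS : h S ≠ 0 := by
    have : h S = (K J).card * f S := by
      simp only [hh]
      rw [sum_congr rfl (g := fun _ => f S)]
      · simp
      · intro σ hσ
        rw [act_fix]
        exact (mem_filter.1 hσ).2
    rw [this]
    have h1 : 0 < (K J).card := card_pos.2 ⟨1, by simp [K]⟩
    have h2 : ((K J).card : ℝ) ≠ 0 := by positivity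
    exact mul_ne_zero h2 hS
  have hinv : ∀ σ ∈ K J, ∀ T, h (act σ T) = h T := by
    intro τ hτ T
    simp only [hh, ← act_mul]
    have hτ' := (mem_filter.1 hτ).2
    apply sum_bij (fun σ _ => σ * τ)
    · intro σ hσ
      have hσ' := (mem_filter.1 hσ).2
      refine mem_filter.2 ⟨mem_univ _, fun j hj => ?_⟩
      rw [Equiv.Perm.mul_apply, hτ' j hj, hσ' j hj]
    · intro σ _ ρ _ h; exact mul_right_cancel h
    · intro σ hσ
      have hσ' := (mem_filter.1 hσ).2
      refine ⟨σ * τ⁻¹, ?_, by simp⟩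
      refine mem_filter.2 ⟨mem_univ _, fun j hj => ?_⟩
      have : τ⁻¹ j = j := by rw [Equiv.Perm.inv_eq_iff_eq, hτ' j hj]
      rw [Equiv.Perm.mul_apply, this, hσ' j hj]
    · intro σ _; rfl
  have hhsupp : ∀ T, h T ≠ 0 → (V T).card ≤ d := fun T hT => hsupp T h (hhev T) hT
  have hpos := inv_pos J d hd (hsupp S f (hevS S) hS) h hhsupp hinv
  have heq : ∑ S, ∑ T, h S * h T * F (S ∪ T) = μ * ∑ S, h S * h S := by
    rw [mul_sum]
    apply sum_congr rfl
    intro S _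
    rw [mul_left_comm, ← hhev, mul_sum]
    apply sum_congr rfl
    intro T _
    by_cases h1 : h S = 0
    · simp [h1]
    by_cases h2 : h T = 0
    · simp [h2]
    rw [A, if_pos ⟨hhsupp S h1, hhsupp T h2⟩]
    ring
  have hsq : 0 < ∑ S, h S * h S :=
    sum_pos' (fun _ _ => mul_self_nonneg _) ⟨S, mem_univ _, mul_self_pos.2 hhS⟩
  rw [heq] at hpos
  nlinarith

/-- edge set of a monomial -/
def ed (d : KEdge n →₀ ℕ) : G n := d.support.image Subtype.val

lemma ed_add (d d' : KEdge n →₀ ℕ) : ed (d + d') = ed d ∪ ed d' := by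
  have : (d + d').support = d.support ∪ d'.support := by
    ext e; simp only [Finsupp.mem_support_iff, mem_union, Finsupp.add_apply]; omega
  rw [ed, this, image_union]; rfl

lemma F_ed (d : KEdge n →₀ ℕ) : F (ed d) =
    (if ∀ e ∈ d.support, ∀ e' ∈ d.support, e ≠ e' →
        Disjoint (e : Finset (Fin n)) (e' : Finset (Fin n))
     then ∏ j ∈ Finset.range d.support.card, (1 / ((n : ℝ) - 2 * j - 1))
     else 0) := by
  have hc : (ed d).card = d.support.card := card_image_of_injective _ Subtype.val_injective
  have hiff : IsM (ed d) ↔ ∀ e ∈ d.support, ∀ e' ∈ d.support, e ≠ e' →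
        Disjoint (e : Finset (Fin n)) (e' : Finset (Fin n)) := by
    constructor
    · intro h e he e' he' hne
      exact h.2 _ (mem_image_of_mem _ he) _ (mem_image_of_mem _ he')
        (fun h => hne (Subtype.ext h))
    · intro h
      refine ⟨?_, ?_⟩
      · intro e he
        obtain ⟨e0, _, rfl⟩ := mem_image.1 he
        exact e0.2
      · intro e he e' he' hne
        obtain ⟨e0, h0, rfl⟩ := mem_image.1 he
        obtain ⟨e1, h1, rfl⟩ := mem_image.1 he'
        exact h e0 h0 e1 h1 (by rintro rfl; exact hne rfl)
  unfold F
  rw [hc]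
  by_cases h : IsM (ed d)
  · rw [if_pos h, if_pos (hiff.1 h)]
  · rw [if_neg h, if_neg (mt hiff.2 h)]

/-- linear version of the functional -/
noncomputable def L (n : ℕ) : MvPolynomial (KEdge n) ℝ →ₗ[ℝ] ℝ :=
  (MvPolynomial.basisMonomials (KEdge n) ℝ).constr ℝ (fun d => F (ed d))

lemma L_monomial (d : KEdge n →₀ ℕ) (c : ℝ) : L n (monomial d c) = c * F (ed d) := by
  have h1 : monomial d c = c • (MvPolynomial.basisMonomials (KEdge n) ℝ) d := by
    simp [MvPolynomial.smul_monomial]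
  rw [h1, map_smul, L, Module.Basis.constr_basis, smul_eq_mul]

lemma L_eq (p : MvPolynomial (KEdge n) ℝ) : L n p = ∑ d ∈ p.support, p.coeff d * F (ed d) := by
  conv_lhs => rw [p.as_sum]
  rw [map_sum]
  simp only [L_monomial]

lemma Emod_eq (p : MvPolynomial (KEdge n) ℝ) : Emod n p = L n p := by
  rw [L_eq, Emod]
  apply sum_congr rfl
  intro d _
  rw [F_ed]

lemma L_red (p : MvPolynomial (KEdge n) ℝ) : L n (red p) = L n p := by
  rw [L_eq p, red, map_sum]
  apply sum_congr rfl
  intro d _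
  rw [L_monomial]
  congr 2
  unfold ed
  congr 1
  ext e
  simp [Finsupp.finsetSum_apply, Finsupp.single_apply]

lemma L_sq (g : MvPolynomial (KEdge n) ℝ) : L n (g ^ 2) =
    ∑ d ∈ g.support, ∑ d' ∈ g.support, g.coeff d * g.coeff d' * F (ed d ∪ ed d') := by
  conv_lhs => rw [g.as_sum]
  rw [sq, sum_mul_sum, map_sum]
  simp only [map_sum, monomial_mul, L_monomial, ed_add]

end Mod2

theorem mod2_pseudoexpectation_psd (n : ℕ) (hn : 0 < n) (hodd : Odd n)
    (g : MvPolynomial (KEdge n) ℝ) (hg : 2 * indexDeg g ≤ n) :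
    0 ≤ Emod n (red (g ^ 2)) := by
  rw [Mod2.Emod_eq, Mod2.L_red, Mod2.L_sq]
  have hd : 2 * indexDeg g < n := by
    obtain ⟨k, rfl⟩ := hodd
    omega
  have hV : ∀ d ∈ g.support, (Mod2.V (Mod2.ed d)).card ≤ indexDeg g := by
    intro d hd
    have h1 := Finset.le_sup (f := fun d : KEdge n →₀ ℕ =>
      (d.support.biUnion fun e => (e : Finset (Fin n))).card) hd
    have h2 : Mod2.V (Mod2.ed d) = d.support.biUnion fun e => (e : Finset (Fin n)) := by
      unfold Mod2.V Mod2.ed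
      rw [image_biUnion]; rfl
    rw [h2]; exact h1
  set q : Mod2.G n → ℝ := fun S => ∑ d ∈ g.support.filter (fun d => Mod2.ed d = S), g.coeff d
  have hpsd := (Mod2.A_psd n (indexDeg g) hd).dotProduct_mulVec_nonneg q
  refine le_of_le_of_eq hpsd (Eq.symm ?_)
  have push : ∀ φ : Mod2.G n → ℝ,
      ∑ S, q S * φ S = ∑ d ∈ g.support, g.coeff d * φ (Mod2.ed d) := by
    intro φ
    rw [← sum_fiberwise g.support Mod2.ed]
    apply sum_congr rfl
    intro S _
    rw [sum_mul]
    apply sum_congr rfl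
    intro d hd
    rw [(mem_filter.1 hd).2]
  simp only [dotProduct, Matrix.mulVec, Pi.star_apply, star_trivial]
  rw [push]
  apply sum_congr rfl
  intro d hd1
  have e1 : ∑ T, Mod2.A n (indexDeg g) (Mod2.ed d) T * q T =
      ∑ T, q T * Mod2.A n (indexDeg g) (Mod2.ed d) T := sum_congr rfl fun _ _ => mul_comm _ _
  rw [e1, push, mul_sum]
  apply sum_congr rfl
  intro d' hd2
  rw [Mod2.A, if_pos ⟨hV d hd1, hV d' hd2⟩]
  ring
end
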